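/- arXiv:1912.00184 — 11 statements merged into one kernel-verified Lean document; each statement's English description precedes it below -/
import Mathlib

section
/- Let F be a field, let n, k, ν ∈ ℕ with 0 < k < n, and let j ∈ ℕ. Let H_0, …, H_ν be the generic (n−k)×n coefficient matrices, i.e. matrices over the polynomial ring R = F[x^{(i)}_{r,c} : 0 ≤ i ≤ ν, 1 ≤ r ≤ n−k, 1 ≤ c ≤ n] whose entries are pairwise distinct indeterminates. Then the full size minor of the partial parity-check matrix 𝔥_j (over R) formed by the columns with indices 1 ≤ j_1 < ⋯ < j_{(j+1)(n−k)} ≤ (ν+j+1)n is a nonzero element of R (equivalently, the minor is not trivially zero, i.e. some term of its Leibniz determinant expansion is a product of entries that are not structural zeros of the block pattern) if and only if j_{(n−k)s+1} > sn and j_{(n−k)s} ≤ sn + νn for all s = 1, …, j. -/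
/-!
Put row `p = r (n-k) + a` (with `a < n-k`) at the position `R p = r n + a` of the line and column
`q = c n + b` at the position `q`. The entry of `𝔥_j` in row `p` and column `q` is either a
structural zero or the indeterminate `x^{(ν+r-c)}_{a,b}`, and `q - R p = (c - r) n + b - a` depends
only on the index of this indeterminate.

If the index conditions hold, no diagonal entry of the chosen square submatrix is a structural
zero (`diag_allowed`). Specialise each indeterminate to `T ^ ((q - R p) ^ 2)` in `F[T]`. A
permutation `σ` avoiding the structural zeros contributes `± T ^ ∑ p, (j_p - R (σ p)) ^ 2`. Since `R`
and `j` are strictly increasing, the strict rearrangement inequality says that this exponent equals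
that of the identity only for `σ = 1` (`eq_one_of_sum_sq_eq`). Hence the specialised minor has a
coefficient equal to `1`, over every field.

Conversely, a nonzero minor has a permutation `σ` avoiding the structural zeros. For each `t` there
are `p ≤ t` with `σ p ≥ t` and `p ≥ t` with `σ p ≤ t` (`exists_le_perm`, `exists_perm_le`), and
with the 0-based `t = (n-k)s` and `t = (n-k)s - 1` these give the two inequalities.
-/

open Polynomial

/-- The partial parity-check matrix `𝔥_j` built from coefficient matrices
`H_0, …, H_ν ∈ R^{(n-k)×n}`: the block in block-row `r ∈ {0,…,j}` and block-column
`c ∈ {0,…,ν+j}` is `H_{ν+r-c}` if `r ≤ c ≤ ν + r` and the zero matrix otherwise. -/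
def pcm {R : Type*} [CommRing R] (n k ν : ℕ) (hn : 0 < n) (hnk : k < n)
    (H : Fin (ν + 1) → Matrix (Fin (n - k)) (Fin n) R) (j : ℕ) :
    Matrix (Fin ((j + 1) * (n - k))) (Fin ((ν + j + 1) * n)) R :=
  fun p q =>
    if h : (p : ℕ) / (n - k) ≤ (q : ℕ) / n ∧ (q : ℕ) / n ≤ ν + (p : ℕ) / (n - k) then
      H ⟨ν + (p : ℕ) / (n - k) - (q : ℕ) / n, by omega⟩
        ⟨(p : ℕ) % (n - k), Nat.mod_lt _ (by omega)⟩
        ⟨(q : ℕ) % n, Nat.mod_lt _ hn⟩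
    else 0

/-- A (0-based) strictly increasing choice `js` of `(j+1)(n-k)` columns of `𝔥_j` is
admissible if (with 1-based indices) `j_{(n-k)s+1} > sn` and `j_{(n-k)s} ≤ sn + νn`
for all `s = 1, …, j`. -/
def Admissible (n k ν j : ℕ) (js : Fin ((j + 1) * (n - k)) → Fin ((ν + j + 1) * n)) : Prop :=
  StrictMono js ∧
  ∀ s : ℕ, 1 ≤ s → s ≤ j →
    ∀ (h1 : (n - k) * s < (j + 1) * (n - k)) (h2 : (n - k) * s - 1 < (j + 1) * (n - k)),
      s * n ≤ (js ⟨(n - k) * s, h1⟩ : ℕ) ∧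
      (js ⟨(n - k) * s - 1, h2⟩ : ℕ) < s * n + ν * n

/-- The complete `j`-MDP minor condition: every full size minor of `𝔥_j` formed by an
admissible choice of columns is nonzero. -/
def CompleteJMDP {F : Type*} [Field F] (n k ν : ℕ) (hn : 0 < n) (hnk : k < n)
    (H : Fin (ν + 1) → Matrix (Fin (n - k)) (Fin n) F) (j : ℕ) : Prop :=
  ∀ js : Fin ((j + 1) * (n - k)) → Fin ((ν + j + 1) * n), Admissible n k ν j js →
    ((pcm n k ν hn hnk H j).submatrix id js).det ≠ 0

open Finset in
theorem exists_le_perm {N : ℕ} (σ : Equiv.Perm (Fin N)) (t : Fin N) : ∃ p, p ≤ t ∧ t ≤ σ p := by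
  by_contra! h
  have := Finset.card_le_card_of_injOn (s := Iic t) (t := Iio t) σ
    (fun p hp => by simpa using h p (by simpa using hp)) σ.injective.injOn
  simp at this

theorem exists_perm_le {N : ℕ} (σ : Equiv.Perm (Fin N)) (t : Fin N) : ∃ p, t ≤ p ∧ σ p ≤ t := by
  obtain ⟨p, hp, hp'⟩ := exists_le_perm σ⁻¹ t
  exact ⟨σ⁻¹ p, hp', by simpa using hp⟩

/-- Equality case of the rearrangement inequality for two strictly increasing sequences, in terms
of sums of squared differences. -/
theorem eq_one_of_sum_sq_eq {N : ℕ} {f g : Fin N → ℤ} (hf : StrictMono f) (hg : StrictMono g)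
    (σ : Equiv.Perm (Fin N))
    (h : ∑ i, (f i - g (σ i)) ^ 2 = ∑ i, (f i - g i) ^ 2) : σ = 1 := by
  have hsq : ∑ i, g (σ i) ^ 2 = ∑ i, g i ^ 2 := Equiv.sum_comp σ (fun i => g i ^ 2)
  have hmul : ∑ i, f i * g (σ i) = ∑ i, f i * g i := by
    simp only [sub_sq, Finset.sum_add_distrib, Finset.sum_sub_distrib, mul_assoc,
      ← Finset.mul_sum] at h
    linarith
  have hmono : Monovary f g := hf.monotone.monovary hg.monotone
  have hmv := hmono.sum_mul_comp_perm_eq_sum_mul_iff.1 hmul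
  have hσ : StrictMono σ := by
    refine Monotone.strictMono_of_injective (fun a b hab => ?_) σ.injective
    by_contra! hlt
    have := hf.le_iff_le.1 (hmv (i := b) (j := a) (by simpa using hg hlt))
    exact absurd (le_antisymm hab this ▸ hlt) (lt_irrefl _)
  ext i
  have : (StrictMono.orderIsoOfSurjective σ hσ σ.surjective) = OrderIso.refl _ :=
    Subsingleton.elim _ _
  have h2 := congrArg (fun e : Fin N ≃o Fin N => e i) this
  simpa using congrArg Fin.val h2

/-- The pair (row `p`, column `q`) is not a structural zero of `𝔥_j`, where `m` stands for the
number `n - k` of rows of a block. -/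
def Allowed (n m ν p q : ℕ) : Prop := p / m ≤ q / n ∧ q / n ≤ ν + p / m

theorem diag_allowed {n m ν j : ℕ} (hn : 0 < n) (hm : 0 < m)
    (js : Fin ((j + 1) * m) → Fin ((ν + j + 1) * n)) (hjs : StrictMono js)
    (h : ∀ s : ℕ, 1 ≤ s → s ≤ j →
        ∀ (h1 : m * s < (j + 1) * m) (h2 : m * s - 1 < (j + 1) * m),
          s * n ≤ (js ⟨m * s, h1⟩ : ℕ) ∧ (js ⟨m * s - 1, h2⟩ : ℕ) < s * n + ν * n)
    (p : Fin ((j + 1) * m)) : Allowed n m ν p (js p) := by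
  have hsj : (p : ℕ) / m < j + 1 := (Nat.div_lt_iff_lt_mul hm).2 p.2
  have hlow : m * ((p : ℕ) / m) ≤ p := Nat.mul_div_le _ _
  have hup : (p : ℕ) < m * ((p : ℕ) / m + 1) := Nat.lt_mul_div_succ _ hm
  have hbd : ∀ s, s ≤ j → m * s < (j + 1) * m := fun s hs => by
    rw [mul_comm]; exact Nat.mul_lt_mul_of_pos_right (by omega) hm
  constructor
  · rw [Nat.le_div_iff_mul_le hn]
    rcases Nat.eq_zero_or_pos ((p : ℕ) / m) with h0 | h0
    · simp [h0]
    · have h1 := hbd _ (Nat.le_of_lt_succ hsj)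
      refine (h _ h0 (Nat.le_of_lt_succ hsj) h1 (by omega)).1.trans ?_
      exact hjs.monotone (show (⟨_, h1⟩ : Fin _) ≤ p from hlow)
  · rw [← Nat.lt_succ_iff, Nat.div_lt_iff_lt_mul hn]
    rcases Nat.lt_or_ge ((p : ℕ) / m) j with h0 | h0
    · have h1 : m * ((p : ℕ) / m + 1) < (j + 1) * m := hbd _ h0
      have h2 : m * ((p : ℕ) / m + 1) - 1 < (j + 1) * m := by omega
      have h3 := (h _ (Nat.le_add_left _ _) h0 h1 h2).2
      have h4 : js p ≤ js ⟨_, h2⟩ :=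
        hjs.monotone (show p ≤ (⟨_, h2⟩ : Fin _) from Nat.le_sub_one_of_lt hup)
      have h5 : (js p : ℕ) ≤ js ⟨_, h2⟩ := h4
      refine lt_of_le_of_lt h5 (h3.trans_le (le_of_eq ?_))
      rw [Nat.succ_eq_add_one]; ring
    · have : (p : ℕ) / m = j := by omega
      rw [this]
      exact (js p).2

/-- The position `r n + a` on the line of row `p = r m + a` (`a < m`). -/
def rowPos (n m p : ℕ) : ℤ := ((p / m * n + p % m : ℕ) : ℤ)

theorem rowPos_strictMono {n m : ℕ} (hmn : m ≤ n) : StrictMono (rowPos n m) := by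
  intro p q hpq
  obtain ⟨k, rfl⟩ := Nat.exists_eq_add_of_le hmn
  have key : ∀ x, x / m * (m + k) + x % m = x + x / m * k := fun x => by
    have := Nat.div_add_mod x m
    linarith [mul_comm (x / m) m, mul_add (x / m) m k]
  unfold rowPos
  rw [key, key]
  have := Nat.mul_le_mul_right k (Nat.div_le_div_right (c := m) hpq.le)
  exact_mod_cast add_lt_add_of_lt_of_le hpq this

/-- The exponent `(q - rowPos p)²` for an entry of row `p` and column `q`, in terms of the index
`(i, a, b)` of the indeterminate at that entry. -/
def weight (n m ν : ℕ) (v : Fin (ν + 1) × Fin m × Fin n) : ℕ :=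
  ((((ν : ℤ) - (v.1 : ℕ)) * n + (v.2.2 : ℕ) - (v.2.1 : ℕ)) ^ 2).toNat

open Classical in
/-- The monomial specialisation of the generic `𝔥_j`. -/
theorem aeval_pcm (F : Type*) [Field F] (n k ν j : ℕ) (hn : 0 < n) (hnk : k < n)
    (p : Fin ((j + 1) * (n - k))) (q : Fin ((ν + j + 1) * n)) :
    MvPolynomial.aeval (fun v => (X : F[X]) ^ weight n (n - k) ν v)
      (pcm n k ν hn hnk (fun i => Matrix.of fun a b =>
          (MvPolynomial.X (i, a, b) : MvPolynomial (Fin (ν + 1) × Fin (n - k) × Fin n) F)) j p q) =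
    if Allowed n (n - k) ν p q then X ^ (((q : ℕ) - rowPos n (n - k) p : ℤ) ^ 2).toNat else 0 := by
  unfold pcm Allowed
  split_ifs with h
  · simp only [Matrix.of_apply, MvPolynomial.aeval_X, weight, rowPos]
    congr 3
    have hq : ((q : ℕ) : ℤ) = (((q : ℕ) / n * n + (q : ℕ) % n : ℕ) : ℤ) := by
      rw [Nat.div_add_mod']
    rw [hq, Nat.cast_sub h.2]
    push_cast
    ring
  · simp

/-- Over the polynomial ring `R = F[x^{(i)}_{r,c}]`, with the generic
coefficient matrices `H_i` whose entries are pairwise distinct indeterminates, a full size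
minor of the partial parity-check matrix `𝔥_j` formed by strictly increasing columns
`j_1 < ⋯ < j_{(j+1)(n-k)}` is a nonzero element of `R` (i.e. is not trivially zero) if and
only if `j_{(n-k)s+1} > sn` and `j_{(n-k)s} ≤ sn + νn` for all `s = 1, …, j`. -/
theorem stmt0 (F : Type*) [Field F] (n k ν j : ℕ) (hn : 0 < n) (hnk : k < n)
    (js : Fin ((j + 1) * (n - k)) → Fin ((ν + j + 1) * n)) (hjs : StrictMono js) :
    ((pcm n k ν hn hnk
        (fun i => Matrix.of fun a b =>
          (MvPolynomial.X (i, a, b) : MvPolynomial (Fin (ν + 1) × Fin (n - k) × Fin n) F))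
        j).submatrix id js).det ≠ 0 ↔
      (∀ s : ℕ, 1 ≤ s → s ≤ j →
        ∀ (h1 : (n - k) * s < (j + 1) * (n - k)) (h2 : (n - k) * s - 1 < (j + 1) * (n - k)),
          s * n ≤ (js ⟨(n - k) * s, h1⟩ : ℕ) ∧
          (js ⟨(n - k) * s - 1, h2⟩ : ℕ) < s * n + ν * n) := by
  have hm : 0 < n - k := Nat.sub_pos_of_lt hnk
  constructor
  · intro hdet s hs1 hsj h1 h2
    rw [Matrix.det_apply] at hdet
    obtain ⟨σ, -, hσ⟩ := Finset.exists_ne_zero_of_sum_ne_zero hdet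
    have hall : ∀ p, Allowed n (n - k) ν (σ p) (js p) := by
      intro p
      by_contra hp
      refine hσ ?_
      rw [Finset.prod_eq_zero (Finset.mem_univ p), smul_zero]
      exact dif_neg hp
    constructor
    · obtain ⟨p, hp, hp'⟩ := exists_le_perm σ ⟨_, h1⟩
      have e1 : s ≤ (σ p : ℕ) / (n - k) := by
        rw [Nat.le_div_iff_mul_le hm, mul_comm]; exact hp'
      exact ((Nat.le_div_iff_mul_le hn).1 (e1.trans (hall p).1)).trans (hjs.monotone hp)
    · obtain ⟨p, hp, hp'⟩ := exists_perm_le σ ⟨_, h2⟩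
      have e1 : (σ p : ℕ) / (n - k) < s := by
        rw [Nat.div_lt_iff_lt_mul hm, mul_comm s]
        have : (σ p : ℕ) ≤ (n - k) * s - 1 := hp'
        have : 0 < (n - k) * s := Nat.mul_pos hm hs1
        omega
      have e2 : (js p : ℕ) / n < s + ν := by have := (hall p).2; omega
      rw [← add_mul]
      exact lt_of_le_of_lt (hjs.monotone hp) ((Nat.div_lt_iff_lt_mul hn).1 e2)
  · intro h hdet
    classical
    have hdiag := diag_allowed hn hm js hjs h
    -- the exponent contributed by the identity permutation
    set W : ℕ := ∑ p, (((js p : ℕ) - rowPos n (n - k) p : ℤ) ^ 2).toNat with hW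
    have h0 := congrArg (fun P => (MvPolynomial.aeval
      (fun v => (X : F[X]) ^ weight n (n - k) ν v) P).coeff W) hdet
    simp only [map_zero, coeff_zero, AlgHom.map_det] at h0
    rw [Matrix.det_apply, finsetSum_coeff, Finset.sum_eq_single 1] at h0
    · simp only [AlgHom.mapMatrix_apply, Matrix.map_apply, Matrix.submatrix_apply, id, aeval_pcm,
        Equiv.Perm.sign_one, one_smul, Equiv.Perm.one_apply, hdiag, if_true,
        Finset.prod_pow_eq_pow_sum, ← hW, coeff_X_pow_self] at h0
      exact one_ne_zero h0
    · intro σ _ hσ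
      simp only [AlgHom.mapMatrix_apply, Matrix.map_apply, Matrix.submatrix_apply, id, aeval_pcm]
      by_cases hall : ∀ p, Allowed n (n - k) ν (σ p) (js p)
      · simp only [hall, if_true, Finset.prod_pow_eq_pow_sum]
        have hne : W ≠ ∑ p, (((js p : ℕ) - rowPos n (n - k) (σ p) : ℤ) ^ 2).toNat := by
          intro he
          refine hσ (eq_one_of_sum_sq_eq (f := fun p => ((js p : ℕ) : ℤ))
            (g := fun p => rowPos n (n - k) p) ?_ ?_ σ ?_)
          · intro a b hab
            exact Int.ofNat_lt.2 (hjs hab)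
          · intro a b hab
            exact rowPos_strictMono (Nat.sub_le n k) hab
          · have := congrArg (Nat.cast (R := ℤ)) he.symm
            rw [hW] at this
            push_cast [Int.toNat_of_nonneg (sq_nonneg _)] at this
            simpa [sq_nonneg] using this
        rcases Int.units_eq_one_or (Equiv.Perm.sign σ) with hs | hs <;>
          simp [hs, coeff_X_pow, hne]
      · push Not at hall
        obtain ⟨p, hp⟩ := hall
        rw [Finset.prod_eq_zero (Finset.mem_univ p) (if_neg hp), smul_zero, coeff_zero]
    · simp
end

section
/- Let F be a field, n, k, ν ∈ ℕ with 0 < k < n, and H_0, …, H_ν ∈ F^{(n−k)×n}. If (H_0, …, H_ν) satisfies the complete i-MDP minor condition for some i ∈ ℕ, then it satisfies the complete j-MDP minor condition for every j ∈ ℕ with j ≤ i. -/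
/-!
It suffices to pass from `j + 1` to `j`. In `𝔥_{j+1}` the first `j + 1` block-rows vanish on the
last block-column and agree with `𝔥_j` on the others. Hence, appending the first `n - k` columns of
the last block-column to an admissible choice `js` for `𝔥_j` gives a choice, again admissible, whose
minor is block lower triangular with the `js`-minor of `𝔥_j` as upper left block. As the minor of
`𝔥_{j+1}` is nonzero, so is that of `𝔥_j`.
-/

open Polynomial

/-- The column choice `js` of `𝔥_j`, followed by the first `n - k` columns of the last
block-column of `𝔥_{j+1}`. -/
def extendCols (n k ν j : ℕ) (js : Fin ((j + 1) * (n - k)) → Fin ((ν + j + 1) * n)) :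
    Fin ((j + 1 + 1) * (n - k)) → Fin ((ν + (j + 1) + 1) * n) :=
  fun p =>
    if h : (p : ℕ) < (j + 1) * (n - k) then
      ⟨js ⟨p, h⟩, by
        have h1 := (js ⟨p, h⟩).isLt
        have h2 : (ν + (j + 1) + 1) * n = (ν + j + 1) * n + n := by ring
        omega⟩
    else
      ⟨(ν + j + 1) * n + (p - (j + 1) * (n - k)), by
        have h1 := p.isLt
        have h2 : (ν + (j + 1) + 1) * n = (ν + j + 1) * n + n := by ring
        have h3 : (j + 1 + 1) * (n - k) = (j + 1) * (n - k) + (n - k) := by ring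
        omega⟩

lemma extendCols_of_lt {n k ν j : ℕ} (js : Fin ((j + 1) * (n - k)) → Fin ((ν + j + 1) * n))
    (p : Fin ((j + 1 + 1) * (n - k))) (h : (p : ℕ) < (j + 1) * (n - k)) :
    (extendCols n k ν j js p : ℕ) = js ⟨p, h⟩ := by
  simp [extendCols, h]

lemma extendCols_of_not_lt {n k ν j : ℕ} (js : Fin ((j + 1) * (n - k)) → Fin ((ν + j + 1) * n))
    (p : Fin ((j + 1 + 1) * (n - k))) (h : ¬ (p : ℕ) < (j + 1) * (n - k)) :
    (extendCols n k ν j js p : ℕ) = (ν + j + 1) * n + (p - (j + 1) * (n - k)) := by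
  simp [extendCols, h]

lemma admissible_extendCols {n k ν j : ℕ} (hnk : k < n)
    {js : Fin ((j + 1) * (n - k)) → Fin ((ν + j + 1) * n)} (hjs : Admissible n k ν j js) :
    Admissible n k ν (j + 1) (extendCols n k ν j js) := by
  obtain ⟨hmono, hadm⟩ := hjs
  have hm : 0 < n - k := by omega
  refine ⟨?_, ?_⟩
  · intro p q hpq
    have hpq' : (p : ℕ) < q := hpq
    rw [Fin.lt_def]
    by_cases hq : (q : ℕ) < (j + 1) * (n - k)
    · rw [extendCols_of_lt js q hq, extendCols_of_lt js p (hpq'.trans hq)]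
      exact hmono (Fin.mk_lt_mk.2 hpq')
    · rw [extendCols_of_not_lt js q hq]
      by_cases hp : (p : ℕ) < (j + 1) * (n - k)
      · rw [extendCols_of_lt js p hp]
        have := (js ⟨p, hp⟩).isLt
        omega
      · rw [extendCols_of_not_lt js p hp]
        omega
  · intro s hs1 hs2 h1 h2
    have hspos : 0 < (n - k) * s := Nat.mul_pos hm hs1
    rcases Nat.lt_or_ge j s with hgt | hsj
    -- The new condition `s = j + 1` holds since the cut is exactly at the last block-column.
    · obtain rfl : s = j + 1 := by omega
      have hc : (n - k) * (j + 1) = (j + 1) * (n - k) := Nat.mul_comm _ _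
      rw [extendCols_of_not_lt js _ (by simp [hc]),
        extendCols_of_lt js _ (by simp only; omega)]
      have hlt := (js ⟨(n - k) * (j + 1) - 1, by omega⟩).isLt
      have he : (ν + j + 1) * n = (j + 1) * n + ν * n := by ring
      constructor
      · rw [he]; omega
      · exact lt_of_lt_of_eq hlt he
    · have hlt : (n - k) * s < (j + 1) * (n - k) := by
        rw [Nat.mul_comm]
        exact Nat.mul_lt_mul_of_pos_right (by omega) hm
      have h := hadm s hs1 hsj hlt (by omega)
      rw [extendCols_of_lt js _ hlt, extendCols_of_lt js _ (by simp only; omega)]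
      exact h

lemma completeJMDP_of_succ {F : Type*} [Field F] (n k ν : ℕ) (hn : 0 < n) (hnk : k < n)
    (H : Fin (ν + 1) → Matrix (Fin (n - k)) (Fin n) F) (j : ℕ)
    (hmdp : CompleteJMDP n k ν hn hnk H (j + 1)) : CompleteJMDP n k ν hn hnk H j := by
  intro js hjs
  have hdet := hmdp _ (admissible_extendCols hnk hjs)
  have hm : 0 < n - k := by omega
  have hsize : (j + 1) * (n - k) + (n - k) = (j + 1 + 1) * (n - k) := by ring
  let e : Fin ((j + 1) * (n - k)) ⊕ Fin (n - k) ≃ Fin ((j + 1 + 1) * (n - k)) :=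
    finSumFinEquiv.trans (finCongr hsize)
  have hel : ∀ a, (e (Sum.inl a) : ℕ) = a := fun a => by simp [e]
  have her : ∀ b, (e (Sum.inr b) : ℕ) = (j + 1) * (n - k) + b := fun b => by simp [e]
  set M := (pcm n k ν hn hnk H (j + 1)).submatrix id (extendCols n k ν j js) with hM
  have h11 : (M.submatrix e e).toBlocks₁₁ = (pcm n k ν hn hnk H j).submatrix id js := by
    ext a b
    have hcol : (extendCols n k ν j js (e (Sum.inl b)) : ℕ) = js b := by
      rw [extendCols_of_lt js _ (by rw [hel]; exact b.isLt)]
      simp [hel]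
    simp only [Matrix.toBlocks₁₁, Matrix.of_apply, Matrix.submatrix_apply, hM, id, pcm, hel, hcol]
  have h12 : (M.submatrix e e).toBlocks₁₂ = 0 := by
    ext a b
    have hcol : ν + j + 1 ≤ (extendCols n k ν j js (e (Sum.inr b)) : ℕ) / n := by
      rw [extendCols_of_not_lt js _ (by rw [her]; omega), Nat.le_div_iff_mul_le hn]
      omega
    have hrow : (a : ℕ) / (n - k) < j + 1 := (Nat.div_lt_iff_lt_mul hm).2 a.isLt
    simp only [Matrix.toBlocks₁₂, Matrix.of_apply, Matrix.submatrix_apply, hM, id, pcm, hel,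
      Matrix.zero_apply]
    rw [dif_neg (by omega)]
  rw [← Matrix.det_submatrix_equiv_self e, ← Matrix.fromBlocks_toBlocks (M.submatrix e e), h12,
    Matrix.det_fromBlocks_zero₁₂, h11] at hdet
  exact left_ne_zero_of_mul hdet

/-- If `(H_0, …, H_ν)` satisfies the complete `i`-MDP minor condition,
then it satisfies the complete `j`-MDP minor condition for every `j ≤ i`. -/
theorem stmt1 {F : Type*} [Field F] (n k ν : ℕ) (hn : 0 < n) (hnk : k < n)
    (H : Fin (ν + 1) → Matrix (Fin (n - k)) (Fin n) F) (i j : ℕ) (hji : j ≤ i)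
    (hmdp : CompleteJMDP n k ν hn hnk H i) :
    CompleteJMDP n k ν hn hnk H j := by
  induction i, hji using Nat.le_induction with
  | base => exact hmdp
  | succ i _ ih => exact ih (completeJMDP_of_succ n k ν hn hnk H i hmdp)
end

section
/- Complete j-MDP convolutional codes are optimal for erasure decoding with maximal delay j in the following sense. Let F be a field, n, k, ν ∈ ℕ with 0 < k < n, j ∈ ℕ, and H_0, …, H_ν ∈ F^{(n−k)×n} satisfying the complete j-MDP minor condition. Let s ≤ j and let E ⊆ {1, …, (ν+s+1)n} be any set of column indices of 𝔥_s. If there exist a field K and matrices H'_0, …, H'_ν ∈ K^{(n−k)×n} such that the columns with indices in E of the partial parity-check matrix 𝔥'_s built from H'_0, …, H'_ν are linearly independent over K, then the columns with indices in E of 𝔥_s built from H_0, …, H_ν are linearly independent over F. (Hence every erasure pattern that is correctable within delay j by some convolutional code with the same parameters is correctable by a complete j-MDP convolutional code.) -/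
/-!
Only the supports of the columns of `𝔥_s` matter. A column in block `c` vanishes outside the block
rows `c - ν, …, c`; hence a nonzero full size minor of a partial parity-check matrix, over any
field, has at most `t(n-k)` columns in the first `t` blocks and at most `(s+1-t)(n-k)` columns from
block `t + ν` on. This is exactly admissibility (`admissible_of_linearIndependent`). So it suffices
to enlarge `E` to the column set of a nonzero full size minor of `𝔥'_s` for some coefficient
matrices over some field, since the minor of `𝔥_s` on these columns is then nonzero by the minor
condition.

The given matrices `H'` may yield an `𝔥'_s` without full row rank, which obstructs the enlargement.
They are therefore deformed along the line `(1 - X) H' + X G` over `K(X)`, where `G_0 = (I | 0)` and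
`G_1 = ⋯ = G_ν = 0` (`unitH`). Linear independence at one value of `X` implies independence over
`K(X)` (`linearIndependent_ratFunc_of_eval`): the value `0` shows that the columns in `E` remain
independent, the value `1` that the rows are independent. Then `E` extends to a basis of the column
space (`exists_full_minor`).

Finally the condition for `j` implies the one for `s ≤ j` (`CompleteJMDP.mono`), by completing an
admissible choice for `𝔥_s` with `n - k` columns in each further block.
-/

open Polynomial

/-! ### Linear algebra -/

open scoped Matrix

/-- Linearly independent vectors all supported on `S` number at most `#S`. -/
lemma card_le_of_support {L ι ρ : Type*} [Field L] [Fintype ι] [Finite ρ]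
    {v : ι → ρ → L} (hv : LinearIndependent L v) (S : Finset ρ)
    (hS : ∀ i, ∀ r ∉ S, v i r = 0) : Fintype.card ι ≤ S.card := by
  classical
  have h2 : LinearIndependent L (fun i => fun r : S => v i r) := by
    rw [Fintype.linearIndependent_iff] at hv ⊢
    intro g hg
    apply hv g
    ext r
    by_cases hr : r ∈ S
    · simpa using congrFun hg ⟨r, hr⟩
    · simp [hS _ r hr]
  simpa using h2.fintype_card_le_finrank

/-- Linear independence is an open condition: polynomial vectors whose values at a point `a` are
linearly independent are linearly independent over the rational functions. A right inverse of the
matrix of values, multiplied onto the polynomial matrix, gives a square matrix whose determinant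
takes the value `1` at `a`. -/
lemma linearIndependent_ratFunc_of_eval {K ι ρ : Type*} [Field K] [Fintype ι] [Fintype ρ]
    (v : ι → ρ → K[X]) (a : K)
    (h : LinearIndependent K (fun i r => (v i r).eval a)) :
    LinearIndependent (RatFunc K) (fun i r => algebraMap K[X] (RatFunc K) (v i r)) := by
  classical
  let V : Matrix ι ρ K[X] := Matrix.of v
  let V0 : Matrix ι ρ K := V.map (evalRingHom a)
  have hV0 : LinearIndependent K V0.row := h
  have hsurj : Function.Surjective V0.mulVec := by
    have hr := hV0.rank_matrix
    have : LinearMap.range V0.mulVecLin = ⊤ := by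
      apply Submodule.eq_top_of_finrank_eq
      rw [Module.finrank_fintype_fun_eq_card]
      exact hr
    exact LinearMap.range_eq_top.1 this
  obtain ⟨B, hB⟩ := Matrix.mulVec_surjective_iff_exists_right_inverse.1 hsurj
  let φ := algebraMap K[X] (RatFunc K)
  let W : Matrix ι ι K[X] := V * B.map C
  have hW : W.det ≠ 0 := by
    intro h0
    have h1 : (evalRingHom a) W.det = 1 := by
      rw [RingHom.map_det]
      have : (evalRingHom a).mapMatrix W = V0 * B := by
        simp only [W, RingHom.mapMatrix_apply, Matrix.map_mul, V0]
        congr 1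
        ext; simp
      rw [this, hB, Matrix.det_one]
    rw [h0, map_zero] at h1
    exact zero_ne_one h1
  have hφ : (φ.mapMatrix W).det ≠ 0 := by
    rw [← RingHom.map_det]
    exact (map_ne_zero_iff φ (IsFractionRing.injective K[X] (RatFunc K))).2 hW
  have hprod : φ.mapMatrix W = V.map φ * (B.map C).map φ := by
    simp only [W, RingHom.mapMatrix_apply, Matrix.map_mul]
  change LinearIndependent (RatFunc K) (V.map φ).row
  rw [← Matrix.vecMul_injective_iff]
  have hinj := Matrix.vecMul_injective_iff.2
    (Matrix.linearIndependent_rows_of_det_ne_zero hφ)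
  intro x y hxy
  apply hinj
  have hxy' : x ᵥ* V.map φ = y ᵥ* V.map φ := hxy
  change x ᵥ* _ = y ᵥ* _
  rw [hprod, ← Matrix.vecMul_vecMul, ← Matrix.vecMul_vecMul, hxy']

/-- If the rows of `M` are linearly independent, any independent set of columns is contained in the
columns of a nonsingular full size minor. -/
lemma exists_full_minor {L : Type*} [Field L] {a b : ℕ} (M : Matrix (Fin a) (Fin b) L)
    (hrow : LinearIndependent L M.row) (E : Set (Fin b))
    (hE : LinearIndependent L (fun e : E => M.transpose e.1)) :
    ∃ js : Fin a → Fin b, StrictMono js ∧ E ⊆ Set.range js ∧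
      LinearIndependent L (fun p => M.transpose (js p)) := by
  classical
  have hE' : LinearIndepOn L M.transpose E := hE
  obtain ⟨T, -, hET, hspan, hT⟩ := exists_linearIndepOn_extension hE' (Set.subset_univ E)
  have hcard : T.toFinset.card = a := by
    have h1 : Module.finrank L (Submodule.span L (Set.range (fun e : T => M.transpose e.1)))
        = Fintype.card T := finrank_span_eq_card hT
    have h2 : Submodule.span L (Set.range (fun e : T => M.transpose e.1))
        = Submodule.span L (Set.range M.col) := by
      apply le_antisymm
      · apply Submodule.span_mono
        rintro _ ⟨e, rfl⟩
        exact ⟨e.1, rfl⟩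
      · rw [Submodule.span_le]
        rintro _ ⟨q, rfl⟩
        have : M.transpose q ∈ Submodule.span L (Set.image (fun q => M.transpose q) T) :=
          hspan ⟨q, Set.mem_univ q, rfl⟩
        rwa [Set.image_eq_range (fun q => M.transpose q) T] at this
    rw [h2, ← Matrix.rank_eq_finrank_span_cols, hrow.rank_matrix, Fintype.card_fin] at h1
    rw [Set.toFinset_card, ← h1]
  let f := T.toFinset.orderEmbOfFin hcard
  have hmem : ∀ p, f p ∈ T := fun p =>
    Set.mem_toFinset.1 (Finset.orderEmbOfFin_mem T.toFinset hcard p)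
  refine ⟨f, f.strictMono, ?_, ?_⟩
  · rw [Finset.range_orderEmbOfFin]
    simpa using hET
  · exact hT.comp (fun p => (⟨f p, hmem p⟩ : T)) (fun p q hpq => f.injective (by simpa using hpq))

/-! ### The band structure of the partial parity-check matrix -/

lemma pcm_eq_zero {R : Type*} [CommRing R] {n k ν : ℕ} {hn : 0 < n} {hnk : k < n}
    {H : Fin (ν + 1) → Matrix (Fin (n - k)) (Fin n) R} {j : ℕ}
    {p : Fin ((j + 1) * (n - k))} {q : Fin ((ν + j + 1) * n)}
    (h : (q : ℕ) / n < (p : ℕ) / (n - k) ∨ ν + (p : ℕ) / (n - k) < (q : ℕ) / n) :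
    pcm n k ν hn hnk H j p q = 0 := by
  unfold pcm
  rw [dif_neg (by omega)]

lemma pcm_map {R S : Type*} [CommRing R] [CommRing S] (f : R →+* S) {n k ν : ℕ} (hn : 0 < n)
    (hnk : k < n) (H : Fin (ν + 1) → Matrix (Fin (n - k)) (Fin n) R) (j : ℕ)
    (p : Fin ((j + 1) * (n - k))) (q : Fin ((ν + j + 1) * n)) :
    f (pcm n k ν hn hnk H j p q) = pcm n k ν hn hnk (fun i => (H i).map f) j p q := by
  unfold pcm
  split_ifs <;> simp

/-- The choice `H_0 = (I | 0)`, `H_1 = ⋯ = H_ν = 0`. -/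
def unitH (K : Type*) [Field K] (n k ν : ℕ) : Fin (ν + 1) → Matrix (Fin (n - k)) (Fin n) K :=
  fun i a b => if (i : ℕ) = 0 ∧ (a : ℕ) = b then 1 else 0

lemma unitH_rows (K : Type*) [Field K] (n k ν : ℕ) (hn : 0 < n) (hnk : k < n) (s : ℕ) :
    LinearIndependent K (pcm n k ν hn hnk (unitH K n k ν) s).row := by
  have hm : 0 < n - k := by omega
  rw [Fintype.linearIndependent_iff]
  intro g hg p
  have hp : (p : ℕ) / (n - k) < s + 1 := (Nat.div_lt_iff_lt_mul hm).2 p.2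
  have hpm : (p : ℕ) % (n - k) < n := (Nat.mod_lt _ hm).trans_le (Nat.sub_le _ _)
  -- the column in which row `p` has its only nonzero entry
  let q : Fin ((ν + s + 1) * n) := ⟨(p : ℕ) % (n - k) + n * (ν + (p : ℕ) / (n - k)), by
    have : (ν + (p : ℕ) / (n - k) + 1) * n ≤ (ν + s + 1) * n :=
      Nat.mul_le_mul_right _ (by omega)
    nlinarith⟩
  have hq1 : (q : ℕ) / n = ν + (p : ℕ) / (n - k) := by
    simp only [q]
    rw [Nat.add_mul_div_left _ _ hn, Nat.div_eq_of_lt hpm, zero_add]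
  have hq2 : (q : ℕ) % n = (p : ℕ) % (n - k) := by
    simp only [q]
    rw [Nat.add_mul_mod_self_left, Nat.mod_eq_of_lt hpm]
  have h := congrFun hg q
  simp only [Finset.sum_apply, Pi.smul_apply, Pi.zero_apply, smul_eq_mul] at h
  rw [Finset.sum_eq_single p] at h
  · have : (pcm n k ν hn hnk (unitH K n k ν) s).row p q = 1 := by
      simp [Matrix.row, pcm, unitH, hq1, hq2]
    rwa [this, mul_one] at h
  · intro r _ hrp
    have : (pcm n k ν hn hnk (unitH K n k ν) s).row r q = 0 := by
      simp only [Matrix.row, pcm, unitH, hq1, hq2]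
      split_ifs with h1 h2
      · exfalso
        apply hrp
        ext
        have h3 : (r : ℕ) / (n - k) = (p : ℕ) / (n - k) := by omega
        rw [← Nat.div_add_mod (r : ℕ) (n - k), ← Nat.div_add_mod (p : ℕ) (n - k), h3, h2.2]
      · rfl
      · rfl
    rw [this, mul_zero]
  · simp

/-- A nonsingular full size minor of a partial parity-check matrix is admissible: columns left of
block `t` live on the first `t` block rows, and columns from block `ν + t` on live on the block rows
from `t` on, so neither kind can be too numerous. -/
lemma admissible_of_linearIndependent {L : Type*} [Field L] (n k ν s : ℕ) (hn : 0 < n)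
    (hnk : k < n) (H : Fin (ν + 1) → Matrix (Fin (n - k)) (Fin n) L)
    (js : Fin ((s + 1) * (n - k)) → Fin ((ν + s + 1) * n)) (hjs : StrictMono js)
    (hli : LinearIndependent L (fun p => (pcm n k ν hn hnk H s).transpose (js p))) :
    Admissible n k ν s js := by
  have hm : 0 < n - k := by omega
  refine ⟨hjs, fun t ht1 hts h1 h2 => ⟨?_, ?_⟩⟩
  · by_contra! hlt
    let i0 : Fin ((s + 1) * (n - k)) := ⟨(n - k) * t, h1⟩
    have hli' : LinearIndependent L (fun p : Finset.Iic i0 =>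
        (pcm n k ν hn hnk H s).transpose (js p.1)) := hli.comp _ Subtype.val_injective
    have := card_le_of_support hli' (Finset.Iio i0) (by
      rintro ⟨i, hi⟩ r hr
      simp only [Finset.mem_Iic, Finset.mem_Iio, not_lt] at hi hr
      change pcm n k ν hn hnk H s r (js i) = 0
      apply pcm_eq_zero
      left
      have hji : (js i : ℕ) < t * n := lt_of_le_of_lt (hjs.monotone hi) hlt
      have h3 : (js i : ℕ) / n < t := (Nat.div_lt_iff_lt_mul hn).2 hji
      have h4 : t ≤ (r : ℕ) / (n - k) := by
        rw [Nat.le_div_iff_mul_le hm, mul_comm]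
        exact hr
      omega)
    rw [Fintype.card_coe, Fin.card_Iic, Fin.card_Iio] at this
    omega
  · by_contra! hge
    have hpos : 0 < (n - k) * t := Nat.mul_pos hm ht1
    let i0 : Fin ((s + 1) * (n - k)) := ⟨(n - k) * t - 1, h2⟩
    have hli' : LinearIndependent L (fun p : Finset.Ici i0 =>
        (pcm n k ν hn hnk H s).transpose (js p.1)) := hli.comp _ Subtype.val_injective
    have := card_le_of_support hli' (Finset.Ioi i0) (by
      rintro ⟨i, hi⟩ r hr
      simp only [Finset.mem_Ici, Finset.mem_Ioi, not_lt] at hi hr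
      change pcm n k ν hn hnk H s r (js i) = 0
      apply pcm_eq_zero
      right
      have hji : t * n + ν * n ≤ (js i : ℕ) := hge.trans (hjs.monotone hi)
      have h3 : t + ν ≤ (js i : ℕ) / n := by
        rw [Nat.le_div_iff_mul_le hn, add_mul]
        exact hji
      have h4 : (r : ℕ) / (n - k) < t := by
        apply Nat.div_lt_of_lt_mul
        have : (r : ℕ) ≤ (n - k) * t - 1 := hr
        omega
      omega)
    rw [Fintype.card_coe, Fin.card_Ici, Fin.card_Ioi] at this
    simp only [i0] at this
    omega

/-! ### Extension of the delay from `s` to `j` -/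

/-- The complete `j`-MDP condition implies the complete `s`-MDP condition for `s ≤ j`. An admissible
choice for `𝔥_s` is completed by the first `n - k` columns of each further block column; the
resulting minor of `𝔥_j` is block lower triangular, with the given minor of `𝔥_s` on top. -/
lemma CompleteJMDP.mono {F : Type*} [Field F] {n k ν j : ℕ} {hn : 0 < n} {hnk : k < n}
    {H : Fin (ν + 1) → Matrix (Fin (n - k)) (Fin n) F}
    (hmdp : CompleteJMDP n k ν hn hnk H j) {s : ℕ} (hs : s ≤ j) :
    CompleteJMDP n k ν hn hnk H s := by
  intro js hjs
  have hm : 0 < n - k := by omega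
  have hmn : n - k ≤ n := Nat.sub_le _ _
  have hdiv : ∀ {p t : ℕ}, p / (n - k) < t ↔ p < t * (n - k) := fun {p t} =>
    Nat.div_lt_iff_lt_mul hm
  have hle : (s + 1) * (n - k) ≤ (j + 1) * (n - k) := Nat.mul_le_mul_right _ (by omega)
  have hle' : (ν + s + 1) * n ≤ (ν + j + 1) * n := Nat.mul_le_mul_right _ (by omega)
  let js' : Fin ((j + 1) * (n - k)) → Fin ((ν + j + 1) * n) := fun p =>
    if h : (p : ℕ) < (s + 1) * (n - k) then Fin.castLE hle' (js ⟨p, h⟩)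
    else ⟨(p : ℕ) % (n - k) + n * (ν + (p : ℕ) / (n - k)), by
      have h1 : (p : ℕ) / (n - k) < j + 1 := hdiv.2 p.2
      have h2 : (p : ℕ) % (n - k) < n - k := Nat.mod_lt _ hm
      have : (ν + (p : ℕ) / (n - k) + 1) * n ≤ (ν + j + 1) * n :=
        Nat.mul_le_mul_right _ (by omega)
      nlinarith⟩
  have hlo : ∀ (p : Fin ((j + 1) * (n - k))) (h : (p : ℕ) < (s + 1) * (n - k)),
      (js' p : ℕ) = js ⟨p, h⟩ := fun p h => by simp [js', h]
  have hhi : ∀ p : Fin ((j + 1) * (n - k)), ¬ (p : ℕ) < (s + 1) * (n - k) →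
      (js' p : ℕ) = (p : ℕ) % (n - k) + n * (ν + (p : ℕ) / (n - k)) := fun p h => by
    simp [js', h]
  have hhi_div : ∀ p : Fin ((j + 1) * (n - k)), ¬ (p : ℕ) < (s + 1) * (n - k) →
      (js' p : ℕ) / n = ν + (p : ℕ) / (n - k) := fun p h => by
    rw [hhi p h, Nat.add_mul_div_left _ _ hn,
      Nat.div_eq_of_lt ((Nat.mod_lt _ hm).trans_le hmn), zero_add]
  have hadm : Admissible n k ν j js' := by
    refine ⟨?_, ?_⟩
    · intro p q hpq
      have hpq' : (p : ℕ) < q := hpq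
      rw [Fin.lt_def]
      by_cases hq : (q : ℕ) < (s + 1) * (n - k)
      · rw [hlo q hq, hlo p (hpq'.trans hq)]
        exact hjs.1 hpq'
      · by_cases hp : (p : ℕ) < (s + 1) * (n - k)
        · rw [hlo p hp, hhi q hq]
          have h1 : s + 1 ≤ (q : ℕ) / (n - k) := by
            rw [← not_lt, hdiv]; exact hq
          have h2 := (js ⟨p, hp⟩).2
          have : (ν + s + 1) * n ≤ (ν + (q : ℕ) / (n - k)) * n :=
            Nat.mul_le_mul_right _ (by omega)
          rw [mul_comm (ν + (q : ℕ) / (n - k)) n] at this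
          omega
        · rw [hhi p hp, hhi q hq]
          have h1 : (p : ℕ) / (n - k) ≤ (q : ℕ) / (n - k) := Nat.div_le_div_right hpq'.le
          rcases h1.eq_or_lt with h1 | h1
          · have hp2 := Nat.div_add_mod (p : ℕ) (n - k)
            have hq2 := Nat.div_add_mod (q : ℕ) (n - k)
            rw [h1] at hp2 ⊢
            omega
          · have h2 : (p : ℕ) % (n - k) < n - k := Nat.mod_lt _ hm
            have : (ν + (p : ℕ) / (n - k) + 1) * n ≤ (ν + (q : ℕ) / (n - k)) * n :=
              Nat.mul_le_mul_right _ (by omega)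
            rw [add_mul _ 1, one_mul, mul_comm _ n, mul_comm _ n] at this
            omega
    · intro t ht1 htj h1 h2
      have hpos : 0 < (n - k) * t := Nat.mul_pos hm ht1
      by_cases hts : t ≤ s
      · have h3 : (n - k) * t < (s + 1) * (n - k) := by
          rw [mul_comm]; exact Nat.mul_lt_mul_of_pos_right (by omega) hm
        have h4 : (n - k) * t - 1 < (s + 1) * (n - k) := by omega
        rw [hlo _ h3, hlo _ h4]
        exact hjs.2 t ht1 hts h3 h4
      · have h3 : (s + 1) * (n - k) ≤ (n - k) * t := by
          rw [mul_comm]; exact Nat.mul_le_mul_left _ (by omega)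
        constructor
        · rw [hhi _ (not_lt.2 h3)]
          simp only [Nat.mul_mod_right, Nat.mul_div_cancel_left _ hm]
          nlinarith
        · have : (t + ν) * n = t * n + ν * n := add_mul _ _ _
          by_cases h4 : (n - k) * t - 1 < (s + 1) * (n - k)
          · rw [hlo _ h4]
            have h5 := (js ⟨_, h4⟩).2
            have : (ν + s + 1) * n ≤ (t + ν) * n := Nat.mul_le_mul_right _ (by omega)
            omega
          · have h5 := hhi_div ⟨(n - k) * t - 1, h2⟩ h4
            have h6 : ((n - k) * t - 1) / (n - k) < t := by
              rw [hdiv, mul_comm t]; omega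
            rw [← add_mul, ← Nat.div_lt_iff_lt_mul hn, h5]
            simp only
            omega
  have hdet := hmdp js' hadm
  have hinj := Matrix.vecMul_injective_iff.2 (Matrix.linearIndependent_rows_of_det_ne_zero hdet)
  intro h0
  obtain ⟨x, hx0, hx⟩ := Matrix.exists_vecMul_eq_zero_iff.2 h0
  apply hx0
  -- pad a left kernel vector of the small minor by zeros
  let y : Fin ((j + 1) * (n - k)) → F := fun p =>
    if h : (p : ℕ) < (s + 1) * (n - k) then x ⟨p, h⟩ else 0
  have hy : y = 0 := by
    apply hinj
    change y ᵥ* (pcm n k ν hn hnk H j).submatrix id js'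
      = 0 ᵥ* (pcm n k ν hn hnk H j).submatrix id js'
    rw [Matrix.zero_vecMul]
    ext q
    simp only [Matrix.vecMul, dotProduct, Matrix.submatrix_apply, id, Pi.zero_apply]
    by_cases hq : (q : ℕ) < (s + 1) * (n - k)
    · have hxq := congrFun hx ⟨q, hq⟩
      simp only [Matrix.vecMul, dotProduct, Matrix.submatrix_apply, id, Pi.zero_apply] at hxq
      rw [← hxq]
      symm
      apply Fintype.sum_of_injective (Fin.castLE hle) (Fin.castLE_injective hle)
      · intro p hp
        have : ¬ (p : ℕ) < (s + 1) * (n - k) := fun h => hp ⟨⟨p, h⟩, rfl⟩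
        simp [y, this]
      · intro p
        have h1 : y (Fin.castLE hle p) = x p := by simp [y]
        rw [h1]
        simp only [pcm, hlo q hq, Fin.val_castLE]
    · apply Finset.sum_eq_zero
      intro p _
      by_cases hp : (p : ℕ) < (s + 1) * (n - k)
      · rw [pcm_eq_zero, mul_zero]
        right
        rw [hhi_div q hq]
        have := hdiv.2 hp
        have := mt hdiv.1 hq
        omega
      · simp [y, hp]
  ext p
  have := congrFun hy (Fin.castLE hle p)
  simpa [y] using this

/-- Complete `j`-MDP convolutional codes are optimal for erasure decoding
with maximal delay `j`: for `s ≤ j` and any set `E` of column indices of `𝔥_s`, if for some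
field `K` and some matrices `H'_0, …, H'_ν` over `K` the columns of `𝔥'_s` indexed by `E`
are linearly independent over `K`, then the columns of `𝔥_s` (built from matrices
satisfying the complete `j`-MDP minor condition) indexed by `E` are linearly independent
over `F`. -/
theorem stmt5 {F : Type*} [Field F] (n k ν j : ℕ) (hn : 0 < n) (hnk : k < n)
    (H : Fin (ν + 1) → Matrix (Fin (n - k)) (Fin n) F)
    (hmdp : CompleteJMDP n k ν hn hnk H j)
    (s : ℕ) (hs : s ≤ j) (E : Set (Fin ((ν + s + 1) * n)))
    (K : Type*) [Field K] (H' : Fin (ν + 1) → Matrix (Fin (n - k)) (Fin n) K)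
    (hind : LinearIndependent K (fun e : E => (pcm n k ν hn hnk H' s).transpose e.1)) :
    LinearIndependent F (fun e : E => (pcm n k ν hn hnk H s).transpose e.1) := by
  -- a line in the space of coefficient matrices through `H'` (at `0`) and `unitH` (at `1`)
  let P : Fin (ν + 1) → Matrix (Fin (n - k)) (Fin n) K[X] := fun i =>
    Matrix.of fun a b => C (H' i a b) + X * C (unitH K n k ν i a b - H' i a b)
  have h0 : ∀ p q, (pcm n k ν hn hnk P s p q).eval 0 = pcm n k ν hn hnk H' s p q := by
    intro p q
    have := pcm_map (evalRingHom (0 : K)) hn hnk P s p q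
    rw [coe_evalRingHom] at this
    rw [this]
    congr 1
    ext i a b
    simp [P]
  have h1 : ∀ p q, (pcm n k ν hn hnk P s p q).eval 1
      = pcm n k ν hn hnk (unitH K n k ν) s p q := by
    intro p q
    have := pcm_map (evalRingHom (1 : K)) hn hnk P s p q
    rw [coe_evalRingHom] at this
    rw [this]
    congr 1
    ext i a b
    simp [P]
  let Q : Fin (ν + 1) → Matrix (Fin (n - k)) (Fin n) (RatFunc K) := fun i =>
    (P i).map (algebraMap K[X] (RatFunc K))
  have hQ : ∀ p q, algebraMap K[X] (RatFunc K) (pcm n k ν hn hnk P s p q)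
      = pcm n k ν hn hnk Q s p q := pcm_map _ hn hnk P s
  have hrow : LinearIndependent (RatFunc K) (pcm n k ν hn hnk Q s).row := by
    have := linearIndependent_ratFunc_of_eval (fun p q => pcm n k ν hn hnk P s p q) 1 (by
      simp only [h1]
      exact unitH_rows K n k ν hn hnk s)
    simp only [hQ] at this
    exact this
  have hcol : LinearIndependent (RatFunc K)
      (fun e : E => (pcm n k ν hn hnk Q s).transpose e.1) := by
    classical
    have := linearIndependent_ratFunc_of_eval
      (fun (e : E) p => pcm n k ν hn hnk P s p e.1) 0 (by
        simp only [h0]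
        exact hind)
    simp only [hQ] at this
    exact this
  obtain ⟨js, hmono, hEjs, hli⟩ := exists_full_minor _ hrow E hcol
  have hadm := admissible_of_linearIndependent n k ν s hn hnk Q js hmono hli
  have hdet := hmdp.mono hs js hadm
  have hF := Matrix.linearIndependent_cols_of_det_ne_zero hdet
  choose g hg using fun e : E => hEjs e.2
  have hginj : Function.Injective g := fun e f hef => Subtype.ext (by rw [← hg e, ← hg f, hef])
  have hcomp : (fun e : E => (pcm n k ν hn hnk H s).transpose e.1)
      = ((pcm n k ν hn hnk H s).submatrix id js).col ∘ g := by
    ext e p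
    simp [hg e]
  rw [hcomp]
  exact hF.comp g hginj
end

section
/- Let F be a field and let (H_2, H_1, H_0) be a triple of row vectors H_i = [h_{1,i}, h_{2,i}] ∈ F^{1×2} (parameters n = 2, k = 1, ν = 2). If (H_0, H_1, H_2) satisfies the complete 3-MDP minor condition (all full size minors of 𝔥_3 ∈ F^{4×12} formed by admissible columns are nonzero), then the polynomials h_1(z) = h_{1,0} + h_{1,1}z + h_{1,2}z² and h_2(z) = h_{2,0} + h_{2,1}z + h_{2,2}z² are coprime in F[z]; equivalently, the resultant Res(h_1, h_2) is nonzero and H(z) = [h_1(z) h_2(z)] is left prime. (Indeed, Res(h_1, h_2) is a factor of an admissible full size minor of 𝔥_3.) -/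
/-!
Block column `c` of `𝔥_3` lists the coefficients of `1, z, z², z³` in `z^(c-2) h_1` and
`z^(c-2) h_2`. The columns of the block columns `2` and `3` therefore form the Sylvester matrix
of `h_1, h_2` up to reordering, and this choice is admissible, so
`Res(h_1, h_2) = p² - q r ≠ 0`, where `p, q, r` are the `2 × 2` minors of the coefficient
matrix on the exponent pairs `(0,2)`, `(0,1)`, `(1,2)` (`det_middle`). The resultant lies in the ideal `(h_1, h_2)` because `p + r z` and
`q + p z` do (`bezout`), which gives coprimality.
-/

open Polynomial

/-- `hpoly c0 c1 c2 = c0 + c1·z + c2·z²`. -/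
noncomputable def hpoly {F : Type*} [Field F] (c0 c1 c2 : F) : Polynomial F :=
  C c0 + C c1 * X + C c2 * X ^ 2

/-- The triple `(H_0, H_1, H_2)` of `1 × 2` coefficient matrices `H_i = [h_{1,i}, h_{2,i}]`
(parameters `n = 2`, `k = 1`, `ν = 2`). -/
def Htriple {F : Type*} [Field F] (h10 h11 h12 h20 h21 h22 : F) :
    Fin (2 + 1) → Matrix (Fin (2 - 1)) (Fin 2) F :=
  ![Matrix.of fun _ c => ![h10, h20] c,
    Matrix.of fun _ c => ![h11, h21] c,
    Matrix.of fun _ c => ![h12, h22] c]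

/-- `(H_2, H_1, H_0)` defines a `(2,1,2)` complete `j`-MDP convolutional code:
`h_1(z) = h_{1,0} + h_{1,1}z + h_{1,2}z²` and `h_2(z) = h_{2,0} + h_{2,1}z + h_{2,2}z²`
are coprime in `F[z]` (equivalently, `H(z) = [h_1(z) h_2(z)]` is left prime) and the
complete `j`-MDP minor condition holds. -/
def Is212 {F : Type*} [Field F] (j : ℕ) (h10 h11 h12 h20 h21 h22 : F) : Prop :=
  IsCoprime (hpoly h10 h11 h12) (hpoly h20 h21 h22) ∧
  CompleteJMDP 2 1 2 (by norm_num) (by norm_num) (Htriple h10 h11 h12 h20 h21 h22) j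

/-- The choice of the four columns in the block columns `2` and `3` of `𝔥_3`. -/
def middleCols : Fin ((3 + 1) * (2 - 1)) → Fin ((2 + 3 + 1) * 2) :=
  fun i => ⟨i + 4, by have := i.2; omega⟩

lemma middleCols_admissible : Admissible 2 1 2 3 middleCols := by
  refine ⟨fun a b h => ?_, fun s h1 h2 h3 h4 => ?_⟩
  · simp only [middleCols, Fin.lt_def] at h ⊢
    omega
  · simp only [middleCols]
    omega

/-- The minor of the middle columns is the negative of the resultant of `h_1` and `h_2`. -/
lemma det_middle {F : Type*} [Field F] (a0 a1 a2 b0 b1 b2 : F) :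
    ((pcm 2 1 2 (by norm_num) (by norm_num) (Htriple a0 a1 a2 b0 b1 b2) 3).submatrix id
      middleCols).det =
      -((a0 * b2 - a2 * b0) ^ 2 - (a0 * b1 - a1 * b0) * (a1 * b2 - a2 * b1)) := by
  have h : (pcm 2 1 2 (by norm_num) (by norm_num) (Htriple a0 a1 a2 b0 b1 b2) 3).submatrix id
      middleCols = (!![a0, b0, 0, 0; a1, b1, a0, b0; a2, b2, a1, b1; 0, 0, a2, b2] :
        Matrix (Fin 4) (Fin 4) F) := by
    ext i j
    change Fin 4 at i j
    fin_cases i <;> fin_cases j <;> rfl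
  rw [h]
  change Matrix.det (n := Fin 4) _ = _
  simp [Matrix.det_succ_row_zero, Fin.sum_univ_succ, Fin.succAbove]
  ring

lemma bezout {F : Type*} [Field F] (a0 a1 a2 b0 b1 b2 : F) :
    (C ((a0 * b2 - a2 * b0) * b2 - (a1 * b2 - a2 * b1) * b1) - C ((a1 * b2 - a2 * b1) * b2) * X)
        * hpoly a0 a1 a2
      + (C ((a1 * b2 - a2 * b1) * a1 - (a0 * b2 - a2 * b0) * a2)
        + C ((a1 * b2 - a2 * b1) * a2) * X) * hpoly b0 b1 b2 =
      C ((a0 * b2 - a2 * b0) ^ 2 - (a0 * b1 - a1 * b0) * (a1 * b2 - a2 * b1)) := by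
  simp only [hpoly, map_sub, map_mul, map_pow]
  ring

/-- For `n = 2`, `k = 1`, `ν = 2`: if `(H_0, H_1, H_2)` satisfies the
complete `3`-MDP minor condition (all admissible full size minors of `𝔥_3 ∈ F^{4×12}` are
nonzero), then `h_1(z) = h_{1,0} + h_{1,1}z + h_{1,2}z²` and
`h_2(z) = h_{2,0} + h_{2,1}z + h_{2,2}z²` are coprime in `F[z]` (equivalently, the
resultant `Res(h_1, h_2)` is nonzero and `H(z)` is left prime). -/
theorem stmt6 {F : Type*} [Field F] (h10 h11 h12 h20 h21 h22 : F)
    (hmdp : CompleteJMDP 2 1 2 (by norm_num) (by norm_num)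
      (Htriple h10 h11 h12 h20 h21 h22) 3) :
    IsCoprime (hpoly h10 h11 h12) (hpoly h20 h21 h22) := by
  have hdet := hmdp middleCols middleCols_admissible
  rw [det_middle, neg_ne_zero] at hdet
  have hu : IsUnit (C ((h10 * h22 - h12 * h20) ^ 2
      - (h10 * h21 - h11 * h20) * (h11 * h22 - h12 * h21))) :=
    Polynomial.isUnit_C.2 hdet.isUnit
  rw [← bezout] at hu
  obtain ⟨u, hu⟩ := hu.exists_left_inv
  exact ⟨_, _, by rw [← hu, mul_add, ← mul_assoc, ← mul_assoc]⟩
end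

section
/- Let F be a field and let (H_3, H_2, H_1, H_0) be a quadruple of row vectors H_i = [h_{1,i}, h_{2,i}] ∈ F^{1×2} (parameters n = 2, k = 1, ν = 3). If (H_0, H_1, H_2, H_3) satisfies the complete 5-MDP minor condition (all full size minors of 𝔥_5 ∈ F^{6×18} formed by admissible columns are nonzero), then the polynomials h_1(z) = h_{1,0} + h_{1,1}z + h_{1,2}z² + h_{1,3}z³ and h_2(z) = h_{2,0} + h_{2,1}z + h_{2,2}z² + h_{2,3}z³ are coprime in F[z]; equivalently, the resultant Res(h_1, h_2) is nonzero and H(z) = [h_1(z) h_2(z)] is left prime. (Indeed, Res(h_1, h_2) is a factor of an admissible full size minor of 𝔥_5.) -/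
/-!
The columns of `𝔥_5` in block columns 3, 4, 5 hold the coefficients of
`h₁, h₂, z h₁, z h₂, z² h₁, z² h₂`, so the corresponding `6 × 6` submatrix `M` is, up to the order
of its columns, the Sylvester matrix of `h₁` and `h₂` (with formal degrees 3). This choice of
columns is admissible, so `M` is invertible. The solution `v` of `M v = (1, 0, 0, 0, 0, 0)` then
lists the coefficients of quadratics `a, b` with `a h₁ + b h₂ = 1`.
-/

open Polynomial

/-- `hpoly3 c0 c1 c2 c3 = c0 + c1·z + c2·z² + c3·z³`. -/
noncomputable def hpoly3 {F : Type*} [Field F] (c0 c1 c2 c3 : F) : Polynomial F :=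
  C c0 + C c1 * X + C c2 * X ^ 2 + C c3 * X ^ 3

/-- The quadruple `(H_0, H_1, H_2, H_3)` of `1 × 2` coefficient matrices
`H_i = [h_{1,i}, h_{2,i}]` (parameters `n = 2`, `k = 1`, `ν = 3`). -/
def Hquad {F : Type*} [Field F] (h10 h11 h12 h13 h20 h21 h22 h23 : F) :
    Fin (3 + 1) → Matrix (Fin (2 - 1)) (Fin 2) F :=
  ![Matrix.of fun _ c => ![h10, h20] c,
    Matrix.of fun _ c => ![h11, h21] c,
    Matrix.of fun _ c => ![h12, h22] c,
    Matrix.of fun _ c => ![h13, h23] c]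

/-- `(H_3, H_2, H_1, H_0)` defines a `(2,1,3)` complete `j`-MDP convolutional code:
the cubics `h_1(z)` and `h_2(z)` are coprime in `F[z]` (equivalently, `H(z)` is left
prime) and the complete `j`-MDP minor condition holds. -/
def Is213 {F : Type*} [Field F] (j : ℕ) (h10 h11 h12 h13 h20 h21 h22 h23 : F) : Prop :=
  IsCoprime (hpoly3 h10 h11 h12 h13) (hpoly3 h20 h21 h22 h23) ∧
  CompleteJMDP 2 1 3 (by norm_num) (by norm_num)
    (Hquad h10 h11 h12 h13 h20 h21 h22 h23) j

/-- For `n = 2`, `k = 1`, `ν = 3`: if `(H_0, H_1, H_2, H_3)` satisfies the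
complete `5`-MDP minor condition (all admissible full size minors of `𝔥_5 ∈ F^{6×18}` are
nonzero), then the cubics `h_1(z)` and `h_2(z)` are coprime in `F[z]` (equivalently, the
resultant `Res(h_1, h_2)` is nonzero and `H(z)` is left prime). -/
theorem stmt7 {F : Type*} [Field F] (h10 h11 h12 h13 h20 h21 h22 h23 : F)
    (hmdp : CompleteJMDP 2 1 3 (by norm_num) (by norm_num)
      (Hquad h10 h11 h12 h13 h20 h21 h22 h23) 5) :
    IsCoprime (hpoly3 h10 h11 h12 h13) (hpoly3 h20 h21 h22 h23) := by
  -- The six consecutive columns forming the block columns 3, 4, 5.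
  let js : Fin ((5 + 1) * (2 - 1)) → Fin ((3 + 5 + 1) * 2) := fun i => ⟨i + 6, by omega⟩
  have hadm : Admissible 2 1 3 5 js := by
    refine ⟨fun a b hab => ?_, fun s hs1 hs5 h1 h2 => ?_⟩
    · simp only [js, Fin.lt_def] at hab ⊢
      omega
    · simp only [js]
      omega
  have hdet := hmdp js hadm
  set M := (pcm 2 1 3 (by norm_num) (by norm_num)
    (Hquad h10 h11 h12 h13 h20 h21 h22 h23) 5).submatrix id js with hM
  let e : Fin ((5 + 1) * (2 - 1)) → F := fun i => if (i : ℕ) = 0 then 1 else 0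
  obtain ⟨v, hv⟩ : ∃ v, M.mulVec v = e :=
    ⟨M⁻¹.mulVec e, by
      rw [Matrix.mulVec_mulVec, Matrix.mul_nonsing_inv _ (isUnit_iff_ne_zero.mpr hdet),
        Matrix.one_mulVec]⟩
  -- Row `r` of `M v = e` says that the coefficient of `z ^ r` in `a h₁ + b h₂` is `e r`.
  have row (r : Fin 6) : ∑ c : Fin 6, M r c * v c = e r := congrFun hv r
  have E0 := row 0
  have E1 := row 1
  have E2 := row 2
  have E3 := row 3
  have E4 := row 4
  have E5 := row 5
  simp [Fin.sum_univ_succ, hM, pcm, js, e, Hquad] at E0 E1 E2 E3 E4 E5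
  refine ⟨C (v 0) + C (v 2) * X + C (v 4) * X ^ 2, C (v 1) + C (v 3) * X + C (v 5) * X ^ 2, ?_⟩
  replace E0 := congrArg (C : F → F[X]) E0
  replace E1 := congrArg (C : F → F[X]) E1
  replace E2 := congrArg (C : F → F[X]) E2
  replace E3 := congrArg (C : F → F[X]) E3
  replace E4 := congrArg (C : F → F[X]) E4
  replace E5 := congrArg (C : F → F[X]) E5
  simp only [C_add, C_mul, C_0, C_1] at E0 E1 E2 E3 E4 E5
  simp only [hpoly3]
  linear_combination E0 + X * E1 + X ^ 2 * E2 + X ^ 3 * E3 + X ^ 4 * E4 + X ^ 5 * E5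
end

section
/- Let F be a field with at least 3 elements and let α ∈ F with α ≠ 0 and α ≠ 1. Then the triple H_2 = [1, 1], H_1 = [1, α], H_0 = [1, 1] defines a (2,1,2) complete 0-MDP convolutional code over F: the polynomials h_1(z) = z² + z + 1 and h_2(z) = z² + αz + 1 are coprime in F[z] (so H(z) = [h_1(z) h_2(z)] is left prime) and every entry of H_0, H_1, H_2 is nonzero, i.e. the complete 0-MDP minor condition holds. -/
/-!
Coprimality: `h₂ - h₁ = (α - 1) z` with `α - 1` invertible, and `h₁ - (z + 1) z = 1`; together
these give an explicit Bézout identity. Minor condition: for `j = 0` the full size minors are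
`1 × 1`, hence the six entries of `[H₂ H₁ H₀]`, each of which is `1` or `α`.
-/

open Polynomial

/-- Let `F` be a field (necessarily with at least 3 elements) and
`α ∈ F` with `α ≠ 0`, `α ≠ 1`. Then `H_2 = [1, 1]`, `H_1 = [1, α]`, `H_0 = [1, 1]`
defines a `(2,1,2)` complete `0`-MDP convolutional code: `h_1(z) = z² + z + 1` and
`h_2(z) = z² + αz + 1` are coprime in `F[z]` (so `H(z)` is left prime) and the complete
`0`-MDP minor condition holds (every entry of `H_0, H_1, H_2` is nonzero). -/
theorem stmt8 {F : Type*} [Field F] (α : F) (hα0 : α ≠ 0) (hα1 : α ≠ 1) :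
    Is212 0 (1 : F) 1 1 1 α 1 := by
  refine ⟨?_, ?_⟩
  · have hb : C (α - 1)⁻¹ * (C α - 1) = (1 : F[X]) := by
      rw [← C_1, ← C_sub, ← C_mul, inv_mul_cancel₀ (sub_ne_zero.mpr hα1)]
    refine ⟨1 + (X + 1) * C (α - 1)⁻¹, -((X + 1) * C (α - 1)⁻¹), ?_⟩
    simp only [hpoly, C_1]
    linear_combination (-(X + 1) * X) * hb
  · intro js _
    have hdet : ∀ M : Matrix (Fin ((0 + 1) * (2 - 1))) (Fin ((0 + 1) * (2 - 1))) F,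
        M.det = M 0 0 := fun M => Matrix.det_fin_one M
    rw [hdet, Matrix.submatrix_apply]
    generalize js 0 = q
    change Fin 6 at q
    fin_cases q <;> simp [pcm, Htriple, hα0]
end

section
/- Let F be a finite field with |F| ≤ 4 (i.e. F ∈ {F_2, F_3, F_4}). Then there exists no (2,1,2) complete 1-MDP convolutional code over F: there is no triple (H_2, H_1, H_0) of row vectors in F^{1×2} such that h_1 and h_2 are coprime in F[z] and the complete 1-MDP minor condition holds. Consequently, there is also no (2,1,2) complete 2-MDP convolutional code over F. -/
/-!
The columns of the `2 × 8` matrix `𝔥_1` are `(a₂,0), (b₂,0), (a₁,a₂), (b₁,b₂), (a₀,a₁), (b₀,b₁),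
(0,a₀), (0,b₀)`, where `aᵢ = h_{1,i}` and `bᵢ = h_{2,i}`. A pair of columns is admissible unless it
is the first two or the last two, so the complete `1`-MDP condition makes columns
`1, 3, 4, 5, 6, 7` represent six distinct points of the projective line `ℙ¹(F)`, which has
`|F| + 1` points. Hence `|F| ≥ 5`; concretely, `0` and the ratios `a₂/a₁, b₂/b₁, a₁/a₀, b₁/b₀`
are five distinct elements of `F` (`false_of_minors`). Coprimality plays no role.

For `𝔥_2`, expanding an admissible minor that uses the first column `(a₂,0,0)` gives `a₂` times an
admissible minor of `𝔥_1`, and every such minor arises (`minors_of_two`), so the complete `2`-MDP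
condition implies the complete `1`-MDP condition.
-/

open Polynomial

/-- First row of `𝔥_1`. -/
def rowTop {F : Type*} [Field F] (a0 a1 a2 b0 b1 b2 : F) : Fin 8 → F :=
  ![a2, b2, a1, b1, a0, b0, 0, 0]

/-- Second row of `𝔥_1`. -/
def rowBot {F : Type*} [Field F] (a0 a1 a2 b0 b1 b2 : F) : Fin 8 → F :=
  ![0, 0, a2, b2, a1, b1, a0, b0]

/-- The complete `1`-MDP minor condition with the `2 × 2` minors written out (0-based columns). -/
def MinorsNeZero {F : Type*} [Field F] (a0 a1 a2 b0 b1 b2 : F) : Prop :=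
  ∀ p q : Fin 8, p < q → 2 ≤ (q : ℕ) → (p : ℕ) < 6 →
    rowTop a0 a1 a2 b0 b1 b2 p * rowBot a0 a1 a2 b0 b1 b2 q -
      rowTop a0 a1 a2 b0 b1 b2 q * rowBot a0 a1 a2 b0 b1 b2 p ≠ 0

lemma minors_of_one {F : Type*} [Field F] {a0 a1 a2 b0 b1 b2 : F}
    (h : CompleteJMDP 2 1 2 (by norm_num) (by norm_num) (Htriple a0 a1 a2 b0 b1 b2) 1) :
    MinorsNeZero a0 a1 a2 b0 b1 b2 := by
  intro p q hpq hq hp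
  set M := pcm 2 1 2 (by norm_num) (by norm_num) (Htriple a0 a1 a2 b0 b1 b2) 1 with hM
  have hadm : Admissible 2 1 2 1 (![p, q] : Fin 2 → Fin 8) := by
    refine ⟨?_, ?_⟩
    · intro i j hij
      change Fin 2 at i j
      fin_cases i <;> fin_cases j <;> first | exact hpq | exact absurd hij (by decide)
    · intro s h1 h2 _ _
      obtain rfl : s = 1 := by omega
      exact ⟨hq, hp⟩
  have hdet := h _ hadm
  have top : ∀ c : Fin 8, M (0 : Fin 2) c = rowTop a0 a1 a2 b0 b1 b2 c := by
    intro c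
    fin_cases c <;> rfl
  have bot : ∀ c : Fin 8, M (1 : Fin 2) c = rowBot a0 a1 a2 b0 b1 b2 c := by
    intro c
    fin_cases c <;> rfl
  have key : (M.submatrix id (![p, q] : Fin 2 → Fin 8)).det =
      M (0 : Fin 2) p * M (1 : Fin 2) q - M (0 : Fin 2) q * M (1 : Fin 2) p :=
    Matrix.det_fin_two _
  rwa [key, top, top, bot, bot] at hdet

lemma det_three_of_first_col {F : Type*} [Field F] (M : Matrix (Fin 3) (Fin 10) F)
    (c p q : Fin 10) (h1 : M 1 c = 0) (h2 : M 2 c = 0) :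
    (M.submatrix id ![c, p, q]).det = M 0 c * (M 1 p * M 2 q - M 1 q * M 2 p) := by
  rw [Matrix.det_fin_three]
  simp [h1, h2]
  ring

/-- The `𝔥_1`-minor in columns `p, q` is, up to the factor `a₂`, the `𝔥_2`-minor in columns
`0, p + 2, q + 2`. -/
lemma minors_of_two {F : Type*} [Field F] {a0 a1 a2 b0 b1 b2 : F}
    (h : CompleteJMDP 2 1 2 (by norm_num) (by norm_num) (Htriple a0 a1 a2 b0 b1 b2) 2) :
    MinorsNeZero a0 a1 a2 b0 b1 b2 := by
  intro p q hpq hq hp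
  set M := pcm 2 1 2 (by norm_num) (by norm_num) (Htriple a0 a1 a2 b0 b1 b2) 2 with hM
  have hadm : Admissible 2 1 2 2 (![0, p.natAdd 2, q.natAdd 2] : Fin 3 → Fin 10) := by
    have h0 : ((0 : Fin 10) : ℕ) = 0 := rfl
    refine ⟨?_, ?_⟩
    · intro i j hij
      change Fin 3 at i j
      rw [Fin.lt_def] at hpq
      fin_cases i <;> fin_cases j <;>
        first
        | exact absurd hij (by decide)
        | (change (_ : ℕ) < _; simp; try omega)
    · intro s h1 h2 _ _
      obtain rfl | rfl : s = 1 ∨ s = 2 := by omega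
      · change 2 ≤ 2 + (p : ℕ) ∧ 0 < 6
        omega
      · change 4 ≤ 2 + (q : ℕ) ∧ 2 + (p : ℕ) < 8
        omega
  have hdet := h _ hadm
  have c0 : M (0 : Fin 3) (0 : Fin 10) = a2 := rfl
  have c1 : M (1 : Fin 3) (0 : Fin 10) = 0 := rfl
  have c2 : M (2 : Fin 3) (0 : Fin 10) = 0 := rfl
  have top : ∀ c : Fin 8, M (1 : Fin 3) (c.natAdd 2) = rowTop a0 a1 a2 b0 b1 b2 c := by
    intro c
    fin_cases c <;> rfl
  have bot : ∀ c : Fin 8, M (2 : Fin 3) (c.natAdd 2) = rowBot a0 a1 a2 b0 b1 b2 c := by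
    intro c
    fin_cases c <;> rfl
  have key : (M.submatrix id (![0, p.natAdd 2, q.natAdd 2] : Fin 3 → Fin 10)).det =
      M (0 : Fin 3) (0 : Fin 10) * (M (1 : Fin 3) (p.natAdd 2) * M (2 : Fin 3) (q.natAdd 2) -
        M (1 : Fin 3) (q.natAdd 2) * M (2 : Fin 3) (p.natAdd 2)) :=
    det_three_of_first_col M _ _ _ c1 c2
  rw [key, c0, top, top, bot, bot] at hdet
  intro h0
  apply hdet
  rw [h0, mul_zero]

/-- Pigeonhole: the five ratios `0, a₂/a₁, b₂/b₁, a₁/a₀, b₁/b₀` are distinct. -/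
lemma false_of_minors {F : Type*} [Field F] [Fintype F] (hF : Fintype.card F ≤ 4)
    {a0 a1 a2 b0 b1 b2 : F} (h : MinorsNeZero a0 a1 a2 b0 b1 b2) : False := by
  have h06 : a2 * a0 - 0 * 0 ≠ 0 := h 0 6 (by decide) (by decide) (by decide)
  have h36 : b1 * a0 - 0 * b2 ≠ 0 := h 3 6 (by decide) (by decide) (by decide)
  have h56 : b0 * a0 - 0 * b1 ≠ 0 := h 5 6 (by decide) (by decide) (by decide)
  have h03 : a2 * b2 - b1 * 0 ≠ 0 := h 0 3 (by decide) (by decide) (by decide)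
  have h04 : a2 * a1 - a0 * 0 ≠ 0 := h 0 4 (by decide) (by decide) (by decide)
  have h23 : a1 * b2 - b1 * a2 ≠ 0 := h 2 3 (by decide) (by decide) (by decide)
  have h24 : a1 * a1 - a0 * a2 ≠ 0 := h 2 4 (by decide) (by decide) (by decide)
  have h25 : a1 * b1 - b0 * a2 ≠ 0 := h 2 5 (by decide) (by decide) (by decide)
  have h34 : b1 * a1 - a0 * b2 ≠ 0 := h 3 4 (by decide) (by decide) (by decide)
  have h35 : b1 * b1 - b0 * b2 ≠ 0 := h 3 5 (by decide) (by decide) (by decide)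
  have h45 : a0 * b1 - b0 * a1 ≠ 0 := h 4 5 (by decide) (by decide) (by decide)
  simp only [zero_mul, mul_zero, sub_zero, ne_eq, mul_eq_zero, not_or] at h06 h36 h56 h03 h04
  obtain ⟨ha2, ha0⟩ := h06
  have hb1 := h36.1
  have hb0 := h56.1
  have hb2 := h03.2
  have ha1 := h04.2
  classical
  have hcard : ({0, a2 / a1, b2 / b1, a1 / a0, b1 / b0} : Finset F).card = 5 := by
    rw [Finset.card_insert_of_notMem, Finset.card_insert_of_notMem,
      Finset.card_insert_of_notMem, Finset.card_pair]
    · rw [ne_eq, div_eq_div_iff ha0 hb0]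
      exact fun e => h45 (by linear_combination -e)
    · simp only [Finset.mem_insert, Finset.mem_singleton, not_or,
        div_eq_div_iff hb1 ha0, div_eq_div_iff hb1 hb0]
      exact ⟨fun e => h34 (by linear_combination -e), fun e => h35 (by linear_combination -e)⟩
    · simp only [Finset.mem_insert, Finset.mem_singleton, not_or,
        div_eq_div_iff ha1 hb1, div_eq_div_iff ha1 ha0, div_eq_div_iff ha1 hb0]
      exact ⟨fun e => h23 (by linear_combination -e), fun e => h24 (by linear_combination -e),
        fun e => h25 (by linear_combination -e)⟩
    · simp [eq_comm (a := (0 : F)), *]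
  have := Finset.card_le_univ ({0, a2 / a1, b2 / b1, a1 / a0, b1 / b0} : Finset F)
  omega

/-- If `F` is a finite field with `|F| ≤ 4`, then there exists no
`(2,1,2)` complete `1`-MDP convolutional code over `F`, and consequently also no `(2,1,2)`
complete `2`-MDP convolutional code over `F`. -/
theorem stmt9 (F : Type*) [Field F] [Fintype F] (hF : Fintype.card F ≤ 4) :
    (¬ ∃ h10 h11 h12 h20 h21 h22 : F, Is212 1 h10 h11 h12 h20 h21 h22) ∧
    (¬ ∃ h10 h11 h12 h20 h21 h22 : F, Is212 2 h10 h11 h12 h20 h21 h22) := by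
  exact ⟨fun ⟨_, _, _, _, _, _, h⟩ => false_of_minors hF (minors_of_one h.2),
    fun ⟨_, _, _, _, _, _, h⟩ => false_of_minors hF (minors_of_two h.2)⟩
end

section
/- Over the field F_8 with 8 elements, the number of tuples (H_2, H_1, H_0) ∈ (F_8^{1×2})³ with all six entries nonzero such that h_1 and h_2 are coprime in F_8[z] and the complete 1-MDP minor condition holds (i.e. H(z) = H_0 + H_1 z + H_2 z² is the left prime parity-check matrix of a (2,1,2) complete 1-MDP convolutional code) is exactly 714 · 7² = 34986. -/
/-!
Write the two polynomials as `h₁ = p (u₀ + z + u₁⁻¹ z²)` and `h₂ = q (u₂ + z + u₃⁻¹ z²)` with units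
`p, q, uᵢ`. The nontrivial admissible minors of the `2 × 8` matrix are those of the four middle
columns, whose entry ratios are `u₀, u₁, u₂, u₃`; so the minor condition says that the `uᵢ`
are distinct (`completeJMDP_iff`), which allows `7 · 6 · 5 · 4 = 840` quadruples.

Since the field has characteristic two and is perfect, `h₁` and `h₂` fail to be coprime only if they
have a common root `z` in the field (`isCoprime_iff`), and that root is nonzero and unique. Rescaling
by `z` gives `u₀ = z a`, `u₁ = z / (1 + a)`, `u₂ = z c`, `u₃ = z / (1 + c)`; these are distinct
and defined exactly when `a ∉ {0, 1}` and `c ∉ {0, 1, a, 1 + a⁻¹, (1 + a)⁻¹}`. As `8 ≢ 1 mod 3`,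
`a² + a + 1` never vanishes, the listed values are distinct, and there are `6 · 3` pairs
(`card_badPair`), hence `7 · 18 = 126` bad quadruples (`card_hasCommonRoot`). The count is therefore
`7² · (840 - 126) = 7² · 714`.
-/

open Polynomial

lemma two_eq_zero_of_card {F : Type*} [Field F] [Fintype F] (hF : Fintype.card F = 8) :
    (2 : F) = 0 := by
  have h : ((8 : ℕ) : F) = 0 := by rw [← hF]; exact Nat.cast_card_eq_zero F
  have h2 : (2 : F) ^ 3 = 0 := by push_cast at h; linear_combination h
  exact pow_eq_zero_iff (by norm_num) |>.mp h2

/-- A root would be a nontrivial cube root of unity, but `3` does not divide `8 - 1`. -/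
lemma sq_add_self_add_one_ne_zero {F : Type*} [Field F] [Fintype F] (hF : Fintype.card F = 8)
    (a : F) : a ^ 2 + a + 1 ≠ 0 := by
  intro h
  have h2 := two_eq_zero_of_card hF
  have h3 : a ^ 3 = 1 := by linear_combination (a - 1) * h
  have h8 : a ^ 8 = a := by rw [← hF]; exact FiniteField.pow_card a
  have h0 : a = a ^ 2 := by
    linear_combination -h8 + (a ^ 5 + a ^ 2) * h3
  have h1 : (1 : F) = 0 := by linear_combination h + h0 - a * h2
  exact one_ne_zero h1

lemma sq_inj_of_card {F : Type*} [Field F] [Fintype F] (hF : Fintype.card F = 8)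
    {x y : F} (h : x ^ 2 = y ^ 2) : x = y := by
  have h2 := two_eq_zero_of_card hF
  have h3 : (x - y) ^ 2 = 0 := by linear_combination h + (y ^ 2 - x * y) * h2
  exact sub_eq_zero.mp (pow_eq_zero_iff (by norm_num) |>.mp h3)

lemma eq_inv_iff_mul_eq_one_of_ne {F : Type*} [Field F] {a b : F} (hb : b ≠ 0) :
    a = b⁻¹ ↔ a * b = 1 := by
  rw [← one_div, eq_div_iff hb]

/-- With nonzero entries, an admissible minor using a column of the first or last block is automatically
nonzero (up to sign it is a product of two entries); the six minors inside the two middle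
blocks remain. -/
lemma completeJMDP_iff {F : Type*} [Field F] {h10 h11 h12 h20 h21 h22 : F}
    (n10 : h10 ≠ 0) (n11 : h11 ≠ 0) (n12 : h12 ≠ 0) (n20 : h20 ≠ 0) (n21 : h21 ≠ 0)
    (n22 : h22 ≠ 0) :
    CompleteJMDP 2 1 2 (by norm_num) (by norm_num) (Htriple h10 h11 h12 h20 h21 h22) 1 ↔
      h11 * h22 ≠ h21 * h12 ∧ h10 * h21 ≠ h20 * h11 ∧ h11 * h11 ≠ h10 * h12 ∧
      h11 * h21 ≠ h20 * h12 ∧ h21 * h11 ≠ h10 * h22 ∧ h21 * h21 ≠ h20 * h22 := by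
  -- The `2 × 2` minors, and admissibility as a condition on a pair of column indices.
  have key : CompleteJMDP 2 1 2 (by norm_num) (by norm_num)
      (Htriple h10 h11 h12 h20 h21 h22) 1 ↔
      ∀ i j : Fin 8, i < j → 2 ≤ j.val → i.val < 6 →
        (![h12, h22, h11, h21, h10, h20, 0, 0] i * ![0, 0, h12, h22, h11, h21, h10, h20] j
        - ![h12, h22, h11, h21, h10, h20, 0, 0] j * ![0, 0, h12, h22, h11, h21, h10, h20] i)
          ≠ 0 := by
    have r0 : ∀ i : Fin 8, pcm 2 1 2 (by norm_num) (by norm_num)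
      (Htriple h10 h11 h12 h20 h21 h22) 1 (0 : Fin 2) i
        = ![h12, h22, h11, h21, h10, h20, 0, 0] i := by
      intro i; fin_cases i <;> simp [pcm, Htriple]
    have r1 : ∀ i : Fin 8, pcm 2 1 2 (by norm_num) (by norm_num)
      (Htriple h10 h11 h12 h20 h21 h22) 1 (1 : Fin 2) i
        = ![0, 0, h12, h22, h11, h21, h10, h20] i := by
      intro i; fin_cases i <;> simp [pcm, Htriple]
    have hdet : ∀ js : Fin 2 → Fin 8, ((pcm 2 1 2 (by norm_num) (by norm_num)
      (Htriple h10 h11 h12 h20 h21 h22) 1).submatrix id js).det =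
        (![h12, h22, h11, h21, h10, h20, 0, 0] (js 0) *
          ![0, 0, h12, h22, h11, h21, h10, h20] (js 1)
        - ![h12, h22, h11, h21, h10, h20, 0, 0] (js 1) *
          ![0, 0, h12, h22, h11, h21, h10, h20] (js 0)) := by
      intro js
      rw [← r0, ← r1, ← r0, ← r1]
      exact Matrix.det_fin_two _
    have hadm : ∀ js : Fin 2 → Fin 8, Admissible 2 1 2 1 js ↔
        js 0 < js 1 ∧ 2 ≤ (js 1).val ∧ (js 0).val < 6 := by
      intro js
      constructor
      · rintro ⟨hm, hs⟩
        have := hs 1 le_rfl le_rfl (by norm_num) (by norm_num)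
        exact ⟨hm (by decide), this.1, this.2⟩
      · rintro ⟨hm, h1, h2⟩
        refine ⟨?_, ?_⟩
        · intro x y hxy
          change Fin 2 at x y
          fin_cases x <;> fin_cases y <;> first | exact hm | exact absurd hxy (by decide)
        · intro s hs1 hs2 _ _
          obtain rfl : s = 1 := by omega
          exact ⟨h1, h2⟩
    constructor
    · intro h i j hij hj hi
      have := h (![i, j] : Fin 2 → Fin 8) ((hadm _).2 ⟨hij, hj, hi⟩)
      rw [hdet] at this
      exact this
    · intro h js hjs
      obtain ⟨a, b, c⟩ := (hadm js).1 hjs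
      rw [hdet js]
      exact h _ _ a b c
  rw [key]
  constructor
  · intro h
    have e1 := h 2 3 (by decide) (by decide) (by decide)
    have e2 := h 4 5 (by decide) (by decide) (by decide)
    have e3 := h 2 4 (by decide) (by decide) (by decide)
    have e4 := h 2 5 (by decide) (by decide) (by decide)
    have e5 := h 3 4 (by decide) (by decide) (by decide)
    have e6 := h 3 5 (by decide) (by decide) (by decide)
    simp [sub_eq_zero] at e1 e2 e3 e4 e5 e6
    exact ⟨e1, e2, e3, e4, e5, e6⟩
  · rintro ⟨e1, e2, e3, e4, e5, e6⟩ i j hij hj hi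
    fin_cases i <;> fin_cases j <;>
      first
      | exact absurd hij (by decide)
      | exact absurd hj (by decide)
      | exact absurd hi (by decide)
      | (simp [sub_eq_zero]; first | done | tauto)

lemma eval_hpoly {F : Type*} [Field F] (a b c z : F) :
    (hpoly a b c).eval z = a + b * z + c * z ^ 2 := by
  simp [hpoly]

/-- In characteristic two `h21 * h₁ - h11 * h₂` has no linear term, so over a perfect field it is a
constant times `(X - s)²`. Hence `h₁` and `h₂` can only share the factor `X - s`. -/
lemma isCoprime_iff {F : Type*} [Field F] [Fintype F] (hF : Fintype.card F = 8)
    {h10 h11 h12 h20 h21 h22 : F} (n11 : h11 ≠ 0)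
    (hB : h11 * h22 ≠ h21 * h12) :
    IsCoprime (hpoly h10 h11 h12) (hpoly h20 h21 h22) ↔
      ¬ ∃ z, h10 + h11 * z + h12 * z ^ 2 = 0 ∧ h20 + h21 * z + h22 * z ^ 2 = 0 := by
  have h2 := two_eq_zero_of_card hF
  constructor
  · rintro ⟨f, g, hfg⟩ ⟨z, hz1, hz2⟩
    have := congrArg (Polynomial.eval z) hfg
    simp [eval_hpoly, hz1, hz2] at this
  · intro h
    have hB' : h21 * h12 - h11 * h22 ≠ 0 := fun e => hB (sub_eq_zero.mp e).symm
    set B := h21 * h12 - h11 * h22 with hBdef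
    -- Frobenius gives the square root `s = t ^ 4` of `t = t ^ 8`.
    obtain ⟨s, hs⟩ : ∃ s : F, B * s ^ 2 = h21 * h10 - h11 * h20 := by
      refine ⟨((h21 * h10 - h11 * h20) / B) ^ 4, ?_⟩
      have h8 := FiniteField.pow_card ((h21 * h10 - h11 * h20) / B)
      rw [hF] at h8
      rw [← pow_mul, h8]
      field_simp
    have hs1 : (hpoly h10 h11 h12).eval s ≠ 0 := by
      rw [eval_hpoly]
      intro e
      refine h ⟨s, e, ?_⟩
      refine (mul_eq_zero.mp (?_ : h11 * _ = 0)).resolve_left n11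
      rw [hBdef] at hs
      linear_combination h21 * e + hs - s ^ 2 * (h12 * h21 - h11 * h22) * h2
    have c1 : IsCoprime (hpoly h10 h11 h12) (X - C s) := by
      obtain ⟨g, hg⟩ := Polynomial.X_sub_C_dvd_sub_C_eval (a := s) (p := hpoly h10 h11 h12)
      refine ⟨C ((hpoly h10 h11 h12).eval s)⁻¹, -C ((hpoly h10 h11 h12).eval s)⁻¹ * g, ?_⟩
      have e : C ((hpoly h10 h11 h12).eval s)⁻¹ * C ((hpoly h10 h11 h12).eval s) = 1 := by
        rw [← C_mul, inv_mul_cancel₀ hs1, C_1]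
      linear_combination C ((hpoly h10 h11 h12).eval s)⁻¹ * hg + e
    have hfac : C h21 * hpoly h10 h11 h12 - C h11 * hpoly h20 h21 h22 =
        C B * (X - C s) ^ 2 := by
      have h2' : (2 : F[X]) = 0 := by
        have := congrArg (C : F → F[X]) h2
        rwa [C_0, C_ofNat] at this
      have hs' := congrArg (C : F → F[X]) hs
      rw [hBdef] at hs' ⊢
      simp only [hpoly, C_mul, C_sub, C_pow] at hs' ⊢
      linear_combination -hs' + (C h21 * C h12 - C h11 * C h22) * C s * X * h2'
    have c2 : IsCoprime (hpoly h10 h11 h12)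
        (C h21 * hpoly h10 h11 h12 - C h11 * hpoly h20 h21 h22) := by
      rw [hfac]
      refine IsCoprime.mul_right ?_ c1.pow_right
      exact (isCoprime_one_right).of_isCoprime_of_dvd_right
        (Polynomial.isUnit_C.mpr hB'.isUnit).dvd
    obtain ⟨f, g, hfg⟩ := c2
    exact ⟨f + g * C h21, -(g * C h11), by linear_combination hfg⟩

/-- Quadruples `u` of distinct units for which the quadratics `u₀ + z + u₁⁻¹ z²` and
`u₂ + z + u₃⁻¹ z²` have a common root. -/
def HasCommonRoot {F : Type*} [Field F] (u : Fin 4 ↪ Fˣ) : Prop :=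
  ∃ z : F, (u 0 : F) + z + (u 1 : F)⁻¹ * z ^ 2 = 0 ∧ (u 2 : F) + z + (u 3 : F)⁻¹ * z ^ 2 = 0

/-- The excluded values of `c` in `BadPair`, with inverses cleared. -/
lemma mem_pairs_aux {F : Type*} [Field F] [Fintype F] (hF : Fintype.card F = 8) {a c : F}
    (h : a ≠ 0 ∧ a ≠ 1) :
    (c ≠ 0 ∧ c ≠ 1 ∧ c ≠ a ∧ c ≠ 1 + a⁻¹ ∧ c ≠ (1 + a)⁻¹) ↔
    (c ≠ 0 ∧ 1 + c ≠ 0 ∧ c ≠ a ∧ a * (1 + c) ≠ 1 ∧ c * (1 + a) ≠ 1) := by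
  have h2 := two_eq_zero_of_card hF
  have h1a : 1 + a ≠ 0 := fun e => h.2 (by linear_combination e - h2)
  have e1 : 1 + c = 0 ↔ c = 1 :=
    ⟨fun e => by linear_combination e - h2, fun e => by linear_combination e + h2⟩
  have e2 : c = 1 + a⁻¹ ↔ a * (1 + c) = 1 := by
    have ha := h.1
    constructor
    · rintro rfl
      field_simp
      linear_combination a * h2
    · intro e
      field_simp
      linear_combination e - a * h2
  have e3 : c = (1 + a)⁻¹ ↔ c * (1 + a) = 1 := eq_inv_iff_mul_eq_one_of_ne h1a
  simp only [ne_eq, e1, e2, e3]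

/-- The conditions under which `a`, `(1 + a)⁻¹`, `c`, `(1 + c)⁻¹` are distinct units. Only over a field of
characteristic two without primitive cube roots of unity is this list complete. -/
def BadPair {F : Type*} [Field F] (p : F × F) : Prop :=
  (p.1 ≠ 0 ∧ p.1 ≠ 1) ∧ p.2 ≠ 0 ∧ p.2 ≠ 1 ∧ p.2 ≠ p.1 ∧ p.2 ≠ 1 + p.1⁻¹ ∧ p.2 ≠ (1 + p.1)⁻¹

/-- The two excluded values of `a` and the five of `c` are distinct, because `a² + a + 1` does not
vanish on `F`: the count is `(8 - 2) * (8 - 5)`. -/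
lemma card_badPair {F : Type*} [Field F] [Fintype F] (hF : Fintype.card F = 8) :
    Nat.card {p : F × F // BadPair p} = 18 := by
  classical
  have h2 := two_eq_zero_of_card hF
  let S : Finset (Σ _ : F, F) := (Finset.univ \ {0, 1} : Finset F).sigma
    fun a => Finset.univ \ {0, 1, a, 1 + a⁻¹, (1 + a)⁻¹}
  have hS : S.card = 18 := by
    rw [Finset.card_sigma, Finset.sum_const_nat (m := 3)]
    · rw [Finset.card_sdiff_of_subset (Finset.subset_univ _), Finset.card_univ, hF,
        Finset.card_pair zero_ne_one]
    · intro a ha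
      simp at ha
      obtain ⟨ha0, ha1⟩ := ha
      have h1a : 1 + a ≠ 0 := fun e => ha1 (by linear_combination e - h2)
      have hq := sq_add_self_add_one_ne_zero hF a
      have n1 : 1 + a⁻¹ ≠ 0 := by
        intro e; field_simp at e; exact h1a (by linear_combination e)
      have n2 : a ≠ 1 + a⁻¹ := by
        intro e; field_simp at e; exact hq (by linear_combination e + (a + 1) * h2)
      have n3 : a ≠ (1 + a)⁻¹ := by
        intro e; rw [eq_inv_iff_mul_eq_one_of_ne h1a] at e
        exact hq (by linear_combination e + h2)
      have n4 : 1 + a⁻¹ ≠ (1 + a)⁻¹ := by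
        intro e; rw [eq_inv_iff_mul_eq_one_of_ne h1a] at e
        field_simp at e
        exact hq (by linear_combination e)
      have n5 : (1 + a)⁻¹ ≠ 1 := by
        intro e; rw [inv_eq_one] at e; exact ha0 (by linear_combination e)
      have n6 : 1 + a⁻¹ ≠ 1 := by simpa using ha0
      rw [Finset.card_sdiff_of_subset (Finset.subset_univ _), Finset.card_univ, hF]
      rw [Finset.card_insert_of_notMem, Finset.card_insert_of_notMem,
        Finset.card_insert_of_notMem, Finset.card_pair n4]
      · simp [n2, n3]
      · simp only [Finset.mem_insert, Finset.mem_singleton, not_or]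
        exact ⟨Ne.symm ha1, n6.symm, n5.symm⟩
      · simp only [Finset.mem_insert, Finset.mem_singleton, not_or]
        exact ⟨zero_ne_one, Ne.symm ha0, n1.symm, (inv_ne_zero h1a).symm⟩
  rw [← hS, ← Nat.card_eq_finsetCard]
  refine Nat.card_congr ((Equiv.sigmaEquivProd F F).symm.subtypeEquiv ?_)
  rintro ⟨a, c⟩
  simp [BadPair, S, not_or]

/-- A bad quadruple has a unique common root `z`, and rescaling by it turns the quadruple into
`z * a, z / (1 + a), z * c, z / (1 + c)` for a unique bad pair `(a, c)`: `7 * 18` of them. -/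
lemma card_hasCommonRoot {F : Type*} [Field F] [Fintype F] (hF : Fintype.card F = 8) :
    Nat.card {u : Fin 4 ↪ Fˣ // HasCommonRoot u} = 126 := by
  classical
  have h2 := two_eq_zero_of_card hF
  have hU : Nat.card Fˣ = 7 := by rw [Nat.card_units, Nat.card_eq_fintype_card, hF]
  have hcard : Nat.card (Fˣ × {p : F × F // BadPair p}) = 126 := by
    rw [Nat.card_prod, hU, card_badPair hF]
  rw [← hcard]
  symm
  have hne : ∀ p : F × F, BadPair p → 1 + p.1 ≠ 0 ∧ 1 + p.2 ≠ 0 := by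
    rintro ⟨a, c⟩ ⟨h1, h3⟩
    exact ⟨fun e => h1.2 (by linear_combination e - h2), ((mem_pairs_aux hF h1).1 h3).2.1⟩
  let g : Fˣ × {p : F × F // BadPair p} → Fin 4 → Fˣ := fun x =>
    ![x.1 * Units.mk0 x.2.1.1 x.2.2.1.1, x.1 / Units.mk0 (1 + x.2.1.1) (hne _ x.2.2).1,
      x.1 * Units.mk0 x.2.1.2 x.2.2.2.1, x.1 / Units.mk0 (1 + x.2.1.2) (hne _ x.2.2).2]
  have hg : ∀ x, Function.Injective (g x) := by
    rintro ⟨z, ⟨a, c⟩, hp⟩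
    obtain ⟨q1, q2⟩ := hne _ hp
    have h1 := hp.1
    have h3 := (mem_pairs_aux hF h1).1 hp.2
    dsimp only at q1 q2 h1 h3
    obtain ⟨m1, m2, m3, m4, m5⟩ := h3
    have hqa := sq_add_self_add_one_ne_zero hF a
    have hqc := sq_add_self_add_one_ne_zero hF c
    have k01 : a ≠ (1 + a)⁻¹ := fun e => hqa (by
      rw [eq_inv_iff_mul_eq_one_of_ne q1] at e; linear_combination e + h2)
    have k23 : c ≠ (1 + c)⁻¹ := fun e => hqc (by
      rw [eq_inv_iff_mul_eq_one_of_ne q2] at e; linear_combination e + h2)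
    have k03 : a ≠ (1 + c)⁻¹ := by rwa [ne_eq, eq_inv_iff_mul_eq_one_of_ne q2]
    have k12 : (1 + a)⁻¹ ≠ c := by rwa [ne_eq, eq_comm, eq_inv_iff_mul_eq_one_of_ne q1]
    have H : ∀ i j, i < j → g (z, ⟨(a, c), hp⟩) i ≠ g (z, ⟨(a, c), hp⟩) j := by
      intro i j hij
      fin_cases i <;> fin_cases j <;> first
        | exact absurd hij (by decide)
        | (simp only [g, ne_eq, div_eq_mul_inv]
           simp [Units.ext_iff, k01, k23, k03, k12, Ne.symm m3])
    intro i j hij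
    rcases lt_trichotomy i j with h | h | h
    · exact absurd hij (H _ _ h)
    · exact h
    · exact absurd hij.symm (H _ _ h)
  refine Nat.card_eq_of_bijective
    (fun x => (⟨⟨g x, hg x⟩, ?_⟩ : {u : Fin 4 ↪ Fˣ // HasCommonRoot u})) ⟨?_, ?_⟩
  · obtain ⟨q1, q2⟩ := hne _ x.2.2
    refine ⟨x.1, ?_, ?_⟩
    · simp [g]
      field_simp
      linear_combination (x.1 : F) * (1 + x.2.1.1) * h2
    · simp [g]
      field_simp
      linear_combination (x.1 : F) * (1 + x.2.1.2) * h2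
  · rintro ⟨z, ⟨a, c⟩, hp⟩ ⟨z', ⟨a', c'⟩, hp'⟩ h
    have h' : g (z, ⟨(a, c), hp⟩) = g (z', ⟨(a', c'), hp'⟩) := by
      have := congrArg (fun u => (u.1 : Fin 4 → Fˣ)) h
      exact this
    obtain ⟨q1, q2⟩ := hne _ hp
    obtain ⟨q1', q2'⟩ := hne _ hp'
    have f0 : (z : F) * a = z' * a' := by
      simpa [g, Units.ext_iff] using congrFun h' 0
    have f1 : (z : F) / (1 + a) = z' / (1 + a') := by
      simpa [g, Units.ext_iff] using congrFun h' 1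
    have f2 : (z : F) * c = z' * c' := by
      simpa [g, Units.ext_iff] using congrFun h' 2
    have f3 : (z : F) / (1 + c) = z' / (1 + c') := by
      simpa [g, Units.ext_iff] using congrFun h' 3
    dsimp only at q1 q2 q1' q2'
    rw [div_eq_div_iff q1 q1'] at f1
    rw [div_eq_div_iff q2 q2'] at f3
    have hac : c - a ≠ 0 := sub_ne_zero.mpr hp.2.2.2.1
    -- Subtracting the two root equations determines `z ^ 2`.
    have hz : (z : F) = z' := by
      apply sq_inj_of_card hF
      have : (c - a) * ((z : F) ^ 2 - z' ^ 2) = 0 := by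
        linear_combination (z : F) * (f2 - f0) - z' * (f1 - f3)
      exact sub_eq_zero.mp ((mul_eq_zero.mp this).resolve_left hac)
    have hz' : z = z' := Units.ext hz
    subst hz'
    have ha : a = a' := mul_left_cancel₀ z.ne_zero f0
    have hc : c = c' := mul_left_cancel₀ z.ne_zero f2
    subst ha hc
    rfl
  · rintro ⟨u, z, hz1, hz2⟩
    have hz0 : z ≠ 0 := by
      rintro rfl
      simp at hz1
    have hu : ∀ i j, i ≠ j → (u i : F) ≠ u j := fun i j hij e =>
      hij (u.injective (Units.ext e))
    have n0 := (u 0).ne_zero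
    have n1 := (u 1).ne_zero
    have n2 := (u 2).ne_zero
    have n3 := (u 3).ne_zero
    have a1 : 1 + (u 0 : F) / z = z / u 1 := by
      field_simp at hz1 ⊢
      linear_combination hz1 - z ^ 2 * h2
    have a2 : 1 + (u 2 : F) / z = z / u 3 := by
      field_simp at hz2 ⊢
      linear_combination hz2 - z ^ 2 * h2
    have b0 : (u 0 : F) / z ≠ 1 := by
      intro e
      rw [e] at a1
      exact div_ne_zero hz0 n1 (by rw [← a1]; linear_combination h2)
    have hp : BadPair ((u 0 : F) / z, (u 2 : F) / z) := by
      refine ⟨⟨div_ne_zero n0 hz0, b0⟩,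
        (mem_pairs_aux hF ⟨div_ne_zero n0 hz0, b0⟩).2 ⟨div_ne_zero n2 hz0, ?_, ?_, ?_, ?_⟩⟩
      · dsimp only; rw [a2]; exact div_ne_zero hz0 n3
      · dsimp only; intro e
        exact hu 2 0 (by decide) (by field_simp at e; exact e)
      · dsimp only; rw [a2]; intro e
        exact hu 0 3 (by decide) (by field_simp at e; exact e)
      · dsimp only; rw [a1]; intro e
        exact hu 2 1 (by decide) (by field_simp at e; exact e)
    refine ⟨(Units.mk0 z hz0, ⟨_, hp⟩), ?_⟩
    apply Subtype.ext
    apply Function.Embedding.ext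
    intro i
    change g _ i = u i
    fin_cases i
    · simp [g, Units.ext_iff]; field_simp
    · simp [g, Units.ext_iff]; rw [a1]; field_simp
    · simp [g, Units.ext_iff]; field_simp
    · simp [g, Units.ext_iff]; rw [a2]; field_simp

/-- `7 * 6 * 5 * 4 - 126 = 714`. -/
lemma card_not_hasCommonRoot {F : Type*} [Field F] [Fintype F] (hF : Fintype.card F = 8) :
    Nat.card {u : Fin 4 ↪ Fˣ // ¬ HasCommonRoot u} = 714 := by
  classical
  have h := card_hasCommonRoot hF
  have hU : Fintype.card Fˣ = 7 := by rw [Fintype.card_units, hF]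
  rw [Nat.card_eq_fintype_card] at h ⊢
  rw [Fintype.card_subtype_compl, h, Fintype.card_embedding_eq, hU]
  rfl

/-- Every tuple with nonzero entries is uniquely of the form `h₁ = p (u₀ + z + u₁⁻¹ z²)`,
`h₂ = q (u₂ + z + u₃⁻¹ z²)`; in these coordinates the minor condition says that the `uᵢ` are
distinct, and coprimality that the two quadratics have no common root in `F`. -/
lemma is212_iff {F : Type*} [Field F] [Fintype F] (hF : Fintype.card F = 8)
    (p q u0 u1 u2 u3 : Fˣ) :
    Is212 1 ((p * u0 : Fˣ) : F) p (p / u1 : Fˣ) (q * u2 : Fˣ) q (q / u3 : Fˣ) ↔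
      ∃ h : Function.Injective ![u0, u1, u2, u3],
        ¬ HasCommonRoot (⟨![u0, u1, u2, u3], h⟩ : Fin 4 ↪ Fˣ) := by
  have inj : Function.Injective ![u0, u1, u2, u3] ↔
      u1 ≠ u3 ∧ u0 ≠ u2 ∧ u1 ≠ u0 ∧ u1 ≠ u2 ∧ u3 ≠ u0 ∧ u3 ≠ u2 := by
    constructor
    · intro h
      exact ⟨h.ne (a₁ := 1) (a₂ := 3) (by decide), h.ne (a₁ := 0) (a₂ := 2) (by decide),
        h.ne (a₁ := 1) (a₂ := 0) (by decide), h.ne (a₁ := 1) (a₂ := 2) (by decide),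
        h.ne (a₁ := 3) (a₂ := 0) (by decide), h.ne (a₁ := 3) (a₂ := 2) (by decide)⟩
    · rintro ⟨e1, e2, e3, e4, e5, e6⟩ i j h
      fin_cases i <;> fin_cases j <;> simp_all [eq_comm]
  have np := p.ne_zero
  have nq := q.ne_zero
  have n1 := u1.ne_zero
  have n3 := u3.ne_zero
  have step : CompleteJMDP 2 1 2 (by norm_num) (by norm_num)
      (Htriple ((p * u0 : Fˣ) : F) p (p / u1 : Fˣ) (q * u2 : Fˣ) q (q / u3 : Fˣ)) 1 ↔
      Function.Injective ![u0, u1, u2, u3] := by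
    rw [inj, completeJMDP_iff (Units.ne_zero _) (Units.ne_zero _) (Units.ne_zero _)
      (Units.ne_zero _) (Units.ne_zero _) (Units.ne_zero _)]
    simp only [ne_eq, Units.ext_iff, Units.val_mul, Units.val_div_eq_div_val]
    field_simp
  rw [Is212, step]
  have cop : Function.Injective ![u0, u1, u2, u3] →
      (IsCoprime (hpoly ((p * u0 : Fˣ) : F) p (p / u1 : Fˣ))
        (hpoly ((q * u2 : Fˣ) : F) q (q / u3 : Fˣ)) ↔
      ¬ ∃ z : F, (u0 : F) + z + (u1 : F)⁻¹ * z ^ 2 = 0 ∧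
        (u2 : F) + z + (u3 : F)⁻¹ * z ^ 2 = 0) := by
    intro hi
    have hB := ((completeJMDP_iff (Units.ne_zero _) (Units.ne_zero _) (Units.ne_zero _)
      (Units.ne_zero _) (Units.ne_zero _) (Units.ne_zero _)).1 (step.2 hi)).1
    rw [isCoprime_iff hF np hB]
    refine not_congr (exists_congr fun z => and_congr ?_ ?_)
    · have e : ((p * u0 : Fˣ) : F) + p * z + (p / u1 : Fˣ) * z ^ 2 =
          p * ((u0 : F) + z + (u1 : F)⁻¹ * z ^ 2) := by
        simp only [Units.val_mul, Units.val_div_eq_div_val]; ring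
      rw [e, mul_eq_zero, or_iff_right np]
    · have e : ((q * u2 : Fˣ) : F) + q * z + (q / u3 : Fˣ) * z ^ 2 =
          q * ((u2 : F) + z + (u3 : F)⁻¹ * z ^ 2) := by
        simp only [Units.val_mul, Units.val_div_eq_div_val]; ring
      rw [e, mul_eq_zero, or_iff_right nq]
  exact ⟨fun ⟨hc, hi⟩ => ⟨hi, (cop hi).1 hc⟩, fun ⟨hi, hc⟩ => ⟨(cop hi).2 hc, hi⟩⟩

/-- Over the field `F_8` with 8 elements, the number of tuples
`(H_2, H_1, H_0)` with all six entries nonzero such that `h_1` and `h_2` are coprime and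
the complete `1`-MDP minor condition holds is exactly `714 · 7² = 34986`. -/
theorem stmt10 (F : Type*) [Field F] [Fintype F] (hF : Fintype.card F = 8) :
    Nat.card {x : F × F × F × F × F × F //
      x.1 ≠ 0 ∧ x.2.1 ≠ 0 ∧ x.2.2.1 ≠ 0 ∧ x.2.2.2.1 ≠ 0 ∧ x.2.2.2.2.1 ≠ 0 ∧
      x.2.2.2.2.2 ≠ 0 ∧
      Is212 1 x.1 x.2.1 x.2.2.1 x.2.2.2.1 x.2.2.2.2.1 x.2.2.2.2.2} = 34986 := by
  classical
  have hU : Nat.card Fˣ = 7 := by rw [Nat.card_units, Nat.card_eq_fintype_card, hF]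
  have hcard : Nat.card (Fˣ × Fˣ × {u : Fin 4 ↪ Fˣ // ¬ HasCommonRoot u}) = 34986 := by
    rw [Nat.card_prod, Nat.card_prod, hU, card_not_hasCommonRoot hF]
  rw [← hcard]
  symm
  have hvec : ∀ u : Fin 4 ↪ Fˣ, ![u 0, u 1, u 2, u 3] = u := by
    intro u
    funext i
    fin_cases i <;> rfl
  refine Nat.card_eq_of_bijective (fun y => ⟨(((y.1 * y.2.2.1 0 : Fˣ) : F), (y.1 : F),
    ((y.1 / y.2.2.1 1 : Fˣ) : F), ((y.2.1 * y.2.2.1 2 : Fˣ) : F), (y.2.1 : F),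
    ((y.2.1 / y.2.2.1 3 : Fˣ) : F)), Units.ne_zero (y.1 * y.2.2.1 0), Units.ne_zero y.1,
    Units.ne_zero (y.1 / y.2.2.1 1), Units.ne_zero (y.2.1 * y.2.2.1 2), Units.ne_zero y.2.1,
    Units.ne_zero (y.2.1 / y.2.2.1 3), ?_⟩) ⟨?_, ?_⟩
  · obtain ⟨p, q, u, hu⟩ := y
    refine (is212_iff hF _ _ _ _ _ _).2 ⟨?_, ?_⟩
    · rw [hvec]; exact u.injective
    · have e : (⟨![u 0, u 1, u 2, u 3], by rw [hvec]; exact u.injective⟩ : Fin 4 ↪ Fˣ) = u :=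
        Function.Embedding.ext fun i => congrFun (hvec u) i
      dsimp only
      rw [e]; exact hu
  · rintro ⟨p, q, u, hu⟩ ⟨p', q', u', hu'⟩ h
    simp only [Subtype.mk.injEq, Prod.mk.injEq, Units.val_inj] at h
    obtain ⟨h0, rfl, h1, h2, rfl, h3⟩ := h
    have e : u = u' := by
      ext i : 1
      fin_cases i
      · exact mul_left_cancel h0
      · exact div_right_injective h1
      · exact mul_left_cancel h2
      · exact div_right_injective h3
    subst e
    rfl
  · rintro ⟨⟨a, p, b, c, q, d⟩, ha, hp, hb, hc, hq, hd, h⟩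
    dsimp only at ha hp hb hc hq hd h
    lift a to Fˣ using ha.isUnit
    lift b to Fˣ using hb.isUnit
    lift c to Fˣ using hc.isUnit
    lift d to Fˣ using hd.isUnit
    lift p to Fˣ using hp.isUnit
    lift q to Fˣ using hq.isUnit
    have key := (is212_iff hF p q (a / p) (p / b) (c / q) (q / d)).1 (by simpa using h)
    obtain ⟨hi, hr⟩ := key
    refine ⟨(p, q, ⟨_, hr⟩), ?_⟩
    apply Subtype.ext
    simp
end

section
/- Over the field F_8 with 8 elements, the number of tuples (H_2, H_1, H_0) ∈ (F_8^{1×2})³ with all six entries nonzero such that h_1 and h_2 are coprime in F_8[z] and the complete 2-MDP minor condition holds (i.e. H(z) = H_0 + H_1 z + H_2 z² is the left prime parity-check matrix of a (2,1,2) complete 2-MDP convolutional code) is exactly 126 · 7² = 6174. An example is given by H_2 = [1, 1], H_1 = [1, α], H_0 = [α+1, α+1], where α is a root of X³ + X + 1 over F_2. -/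
/-!
Three commuting actions of the unit group preserve the conditions (`det_scaled_ne_zero_iff`):
scaling `h_1` by `a`, scaling `h_2` by `b`, and rescaling the variable `z` by `c`. They act freely
on the tuples with nonzero entries, and every orbit contains exactly one tuple with
`H_2 = [1, 1]`, `H_1 = [1, v]`, `H_0 = [u, w]`. Hence the count is `7³` times the number of good
normalized triples `(u, v, w)`.

The field is identified with an explicit copy of `𝔽₈` on triples of bits via the basis `1, α, α²`
(`phi`, `phi_bijective`). In that copy, evaluation of the minors for the `7³` normalized triples
finds `18` good ones (`card_good`), and the resultant of `h_1` and `h_2` is nonzero for each of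
them (`good_res`). So the minor condition already implies coprimality (`isCoprime_hpoly`), and the
count is `18 · 7³ = 126 · 7² = 6174`.
-/

open Polynomial

namespace F8Count

/-! ### A computable copy of the field with eight elements -/

/-- Bit triples `(x₀, x₁, x₂)`, standing for `x₀ + x₁ α + x₂ α²` with `α³ = α + 1`. -/
abbrev K := Bool × Bool × Bool

/-- The zero element of the bit model. -/
def kzero : K := (false, false, false)

/-- The unit element of the bit model. -/
def kone : K := (true, false, false)

/-- Application of `f` to `x` that first evaluates the bits of `x`, so that the finite checks do not
recompute `x` at each of its occurrences in `f x`. -/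
def force {β : Type} (x : K) (f : K → β) : β :=
  match x with
  | (a, b, c) =>
    match a, b, c with
    | false, false, false => f (false, false, false)
    | false, false, true => f (false, false, true)
    | false, true, false => f (false, true, false)
    | false, true, true => f (false, true, true)
    | true, false, false => f (true, false, false)
    | true, false, true => f (true, false, true)
    | true, true, false => f (true, true, false)
    | true, true, true => f (true, true, true)

theorem force_eq {β : Type} (x : K) (f : K → β) : force x f = f x := by
  obtain ⟨_ | _, _ | _, _ | _⟩ := x <;> rfl

/-- Addition in the bit model. In characteristic two it is also subtraction. -/
def kadd (x y : K) : K :=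
  force x fun x => force y fun y => (xor x.1 y.1, xor x.2.1 y.2.1, xor x.2.2 y.2.2)

/-- Multiplication in the bit model, reduced with `α³ = α + 1` and `α⁴ = α² + α`. -/
def kmul (x y : K) : K :=
  force x fun x => force y fun y =>
  let d3 := xor (x.2.1 && y.2.2) (x.2.2 && y.2.1)
  let d4 := x.2.2 && y.2.2
  (xor (x.1 && y.1) d3,
   xor (xor (x.1 && y.2.1) (x.2.1 && y.1)) (xor d3 d4),
   xor (xor (xor (x.1 && y.2.2) (x.2.1 && y.2.1)) (x.2.2 && y.1)) d4)

/-- The entry in row `r` and column `q` (both counted from `0`) of the partial parity-check matrix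
of `H_2 = [1, 1]`, `H_1 = [1, v]`, `H_0 = [u, w]`, in the bit model. -/
def kent (u v w : K) (r q : ℕ) : K :=
  if r ≤ q / 2 then
    if q / 2 = r then kone
    else if q / 2 = r + 1 then (if q % 2 = 0 then kone else v)
    else if q / 2 = r + 2 then (if q % 2 = 0 then u else w)
    else kzero
  else kzero

/-- The minor on columns `a, b, c`, in the bit model (signs do not matter there). -/
def kdet (u v w : K) (a b c : ℕ) : K :=
  force (kent u v w 0 a) fun a0 => force (kent u v w 1 a) fun a1 => force (kent u v w 2 a) fun a2 =>
  force (kent u v w 0 b) fun b0 => force (kent u v w 1 b) fun b1 => force (kent u v w 2 b) fun b2 =>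
  force (kent u v w 0 c) fun c0 => force (kent u v w 1 c) fun c1 => force (kent u v w 2 c) fun c2 =>
  kadd (kadd (kmul a0 (kadd (kmul b1 c2) (kmul c1 b2))) (kmul b0 (kadd (kmul a1 c2) (kmul c1 a2))))
    (kmul c0 (kadd (kmul a1 b2) (kmul b1 a2)))

/-- The resultant of `u + z + z²` and `w + v z + z²`, in the bit model. -/
def kres (u v w : K) : K :=
  kadd (kmul (kadd w u) (kadd w u)) (kmul (kadd v kone) (kadd w (kmul u v)))

/-- The normalized triple `(u, v, w)` has nonzero entries and nonzero admissible minors. -/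
def Good (u v w : K) : Prop :=
  u ≠ kzero ∧ v ≠ kzero ∧ w ≠ kzero ∧
  ∀ a : Fin 10, a.val < 6 → ∀ b : Fin 10, a.val < b.val ∧ 2 ≤ b.val ∧ b.val < 8 →
    ∀ c : Fin 10, b.val < c.val ∧ 4 ≤ c.val → kdet u v w a b c ≠ kzero

set_option synthInstance.maxHeartbeats 200000 in
set_option synthInstance.maxSize 1000 in
instance (u v w : K) : Decidable (Good u v w) := by unfold Good; infer_instance

theorem card_good : Fintype.card {t : K × K × K // Good t.1 t.2.1 t.2.2} = 18 := by
  decide +kernel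

theorem good_res (u v w : K) (h : Good u v w) : kres u v w ≠ kzero := by
  -- In this order the minors are evaluated only for the few triples with vanishing resultant.
  have key : ∀ u v w : K, kres u v w = kzero → ¬ Good u v w := by decide +kernel
  exact fun h0 => key u v w h0 h

theorem good_example : Good (true, true, false) (false, true, false) (true, true, false) := by
  decide +kernel

theorem kmul_inv : ∀ x : K, x ≠ kzero → ∃ y, kmul x y = kone := by decide

theorem kadd_eq_zero : ∀ x y : K, kadd x y = kzero → x = y := by decide

section Model

variable {F : Type*} [Field F]

/-- The element of `F` encoded by a bit. -/
def bit (x : Bool) : F := if x then 1 else 0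

/-- The element of `F` encoded by a bit triple, in the basis `1, α, α²`. -/
def phi (α : F) (x : K) : F := bit x.1 + bit x.2.1 * α + bit x.2.2 * α ^ 2

theorem bit_and (x y : Bool) : (bit (x && y) : F) = bit x * bit y := by
  cases x <;> cases y <;> simp [bit]

theorem bit_xor (h2 : (2 : F) = 0) (x y : Bool) : (bit (xor x y) : F) = bit x + bit y := by
  cases x <;> cases y <;> simp [bit]
  linear_combination -h2

theorem phi_zero (α : F) : phi α kzero = 0 := by simp [phi, kzero, bit]

theorem phi_one (α : F) : phi α kone = 1 := by simp [phi, kone, bit]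

theorem phi_add (h2 : (2 : F) = 0) (α : F) (x y : K) :
    phi α (kadd x y) = phi α x + phi α y := by
  simp only [phi, kadd, force_eq, bit_xor h2]
  ring

theorem phi_mul (h2 : (2 : F) = 0) {α : F} (hα : α ^ 3 + α + 1 = 0) (x y : K) :
    phi α (kmul x y) = phi α x * phi α y := by
  have h3 : α ^ 3 = α + 1 := by linear_combination hα - (α + 1) * h2
  have h4 : α ^ 4 = α ^ 2 + α := by linear_combination α * h3
  simp only [phi, kmul, force_eq, bit_xor h2, bit_and]
  linear_combination
    (-(bit x.2.1 * bit y.2.2 + bit x.2.2 * bit y.2.1)) * h3 - bit x.2.2 * bit y.2.2 * h4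

theorem phi_eq_zero (h2 : (2 : F) = 0) {α : F} (hα : α ^ 3 + α + 1 = 0) {x : K} :
    phi α x = 0 ↔ x = kzero := by
  refine ⟨fun h => ?_, fun h => h ▸ phi_zero α⟩
  by_contra hx
  obtain ⟨y, hy⟩ := kmul_inv x hx
  have h1 := phi_mul h2 hα x y
  rw [hy, phi_one, h, zero_mul] at h1
  exact one_ne_zero h1

theorem phi_bijective [Fintype F] (hF : Fintype.card F = 8) (h2 : (2 : F) = 0) {α : F}
    (hα : α ^ 3 + α + 1 = 0) : Function.Bijective (phi α) := by
  rw [Fintype.bijective_iff_injective_and_card]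
  refine ⟨fun x y hxy => kadd_eq_zero x y ((phi_eq_zero h2 hα).1 ?_), by rw [hF]; rfl⟩
  rw [phi_add h2, hxy]
  linear_combination phi α y * h2

/-! ### Minors and coprimality -/

/-- The partial parity-check matrix for `n = 2`, `k = 1`, `ν = 2`, `j = 2`, with its dimensions
in evaluated form. -/
def mat (h10 h11 h12 h20 h21 h22 : F) : Matrix (Fin 3) (Fin 10) F :=
  pcm 2 1 2 (by norm_num) (by norm_num) (Htriple h10 h11 h12 h20 h21 h22) 2

theorem mat_eq (h10 h11 h12 h20 h21 h22 : F) : mat h10 h11 h12 h20 h21 h22 =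
    !![h12, h22, h11, h21, h10, h20, 0, 0, 0, 0;
       0, 0, h12, h22, h11, h21, h10, h20, 0, 0;
       0, 0, 0, 0, h12, h22, h11, h21, h10, h20] := by
  ext i q
  fin_cases i <;> fin_cases q <;> rfl

theorem completeJMDP_iff (h10 h11 h12 h20 h21 h22 : F) :
    CompleteJMDP 2 1 2 (by norm_num) (by norm_num) (Htriple h10 h11 h12 h20 h21 h22) 2 ↔
    ∀ a : Fin 10, a.val < 6 → ∀ b : Fin 10, a.val < b.val ∧ 2 ≤ b.val ∧ b.val < 8 →
      ∀ c : Fin 10, b.val < c.val ∧ 4 ≤ c.val →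
        ((mat h10 h11 h12 h20 h21 h22).submatrix id ![a, b, c]).det ≠ 0 := by
  constructor
  · intro h a ha b hb c hc
    refine h ![a, b, c] ⟨?_, ?_⟩
    · refine Fin.strictMono_iff_lt_succ (n := 2) |>.2 fun i => ?_
      fin_cases i
      · exact hb.1
      · exact hc.1
    · intro s hs1 hs2 _ _
      interval_cases s
      · exact ⟨hb.2.1, ha⟩
      · exact ⟨hc.2, hb.2.2⟩
  · rintro h js ⟨hm, hs⟩
    have h1 := hs 1 (by norm_num) (by norm_num) (by norm_num) (by norm_num)
    have h2 := hs 2 (by norm_num) (by norm_num) (by norm_num) (by norm_num)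
    have m1 : (js (0 : Fin 3)).val < (js (1 : Fin 3)).val :=
      hm (show (0 : Fin 3) < 1 by decide)
    have m2 : (js (1 : Fin 3)).val < (js (2 : Fin 3)).val :=
      hm (show (1 : Fin 3) < 2 by decide)
    have key := h (js (0 : Fin 3)) h1.2 (js (1 : Fin 3)) ⟨m1, h1.1, h2.2⟩
      (js (2 : Fin 3)) ⟨m2, h2.1⟩
    have e : (![js (0 : Fin 3), js (1 : Fin 3), js (2 : Fin 3)] : Fin 3 → Fin 10) = js := by
      funext i
      fin_cases i <;> rfl
    rw [e] at key
    exact key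

/-- Row `r` of the scaled matrix, multiplied by `c ^ r`, is the normalized row with column `q`
multiplied by `a * c ^ (q / 2)` or `b * c ^ (q / 2)`; so corresponding minors vanish together. -/
theorem det_scaled_ne_zero_iff {a b c : F} (ha : a ≠ 0) (hb : b ≠ 0) (hc : c ≠ 0) (u v w : F)
    (js : Fin 3 → Fin 10) :
    ((mat (a * c ^ 2 * u) (a * c) a (b * c ^ 2 * w) (b * c * v) b).submatrix id js).det ≠ 0 ↔
      ((mat u 1 1 w v 1).submatrix id js).det ≠ 0 := by
  set A := mat (a * c ^ 2 * u) (a * c) a (b * c ^ 2 * w) (b * c * v) b with hA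
  set B := mat u 1 1 w v 1 with hB
  let s : Fin 10 → F := fun q => (if q.val % 2 = 0 then a else b) * c ^ (q.val / 2)
  have hs : ∀ q, s q ≠ 0 := fun q =>
    mul_ne_zero (by split_ifs <;> assumption) (pow_ne_zero _ hc)
  have hent : ∀ (i : Fin 3) (q : Fin 10), c ^ i.val * A i q = s q * B i q := by
    intro i q
    rw [hA, hB, mat_eq, mat_eq]
    fin_cases i <;> fin_cases q <;> simp [s] <;> ring
  have hdet : (∏ i : Fin 3, c ^ i.val) * (A.submatrix id js).det =
      (∏ i, s (js i)) * (B.submatrix id js).det := by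
    rw [← Matrix.det_mul_column, ← Matrix.det_mul_row]
    congr 1
    ext i k
    exact hent i (js k)
  have p1 : (∏ i : Fin 3, c ^ i.val) ≠ 0 := Finset.prod_ne_zero_iff.2 fun _ _ => pow_ne_zero _ hc
  have p2 : (∏ i, s (js i)) ≠ 0 := Finset.prod_ne_zero_iff.2 fun _ _ => hs _
  constructor
  · intro h h0
    rw [h0, mul_zero] at hdet
    exact mul_ne_zero p1 h hdet
  · intro h h0
    rw [h0, mul_zero] at hdet
    exact mul_ne_zero p2 h hdet.symm

theorem mat_phi (α : F) (u v w : K) (i : Fin 3) (q : Fin 10) :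
    mat (phi α u) 1 1 (phi α w) (phi α v) 1 i q = phi α (kent u v w i q) := by
  rw [mat_eq]
  fin_cases i <;> fin_cases q <;> simp [kent, phi_zero, phi_one]

theorem det_phi (h2 : (2 : F) = 0) {α : F} (hα : α ^ 3 + α + 1 = 0) (u v w : K)
    (a b c : Fin 10) :
    ((mat (phi α u) 1 1 (phi α w) (phi α v) 1).submatrix id ![a, b, c]).det =
      phi α (kdet u v w a b c) := by
  have hneg : ∀ x y : F, x - y = x + y := fun x y => by linear_combination -y * h2
  rw [Matrix.det_fin_three]
  simp only [Matrix.submatrix_apply, id, mat_phi, kdet, force_eq, phi_add h2, phi_mul h2 hα, hneg]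
  simp
  ring

/-- The Bézout identity behind the nonvanishing of the resultant of two quadratics. -/
theorem isCoprime_hpoly {a0 a1 a2 b0 b1 b2 : F}
    (hR : (a2 * b0 - a0 * b2) ^ 2 - (a2 * b1 - a1 * b2) * (a1 * b0 - a0 * b1) ≠ 0) :
    IsCoprime (hpoly a0 a1 a2) (hpoly b0 b1 b2) := by
  set R := (a2 * b0 - a0 * b2) ^ 2 - (a2 * b1 - a1 * b2) * (a1 * b0 - a0 * b1) with hRdef
  obtain ⟨p, q, key⟩ : ∃ p q : F[X], p * hpoly a0 a1 a2 + q * hpoly b0 b1 b2 = C R := by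
    refine ⟨C (-(a2 * b0 - a0 * b2) * b2 + (a2 * b1 - a1 * b2) * b1)
        + C ((a2 * b1 - a1 * b2) * b2) * X,
      C ((a2 * b0 - a0 * b2) * a2 - (a2 * b1 - a1 * b2) * a1)
        - C ((a2 * b1 - a1 * b2) * a2) * X, ?_⟩
    rw [hRdef]
    simp only [hpoly, map_add, map_sub, map_mul, map_neg, map_pow]
    ring
  have hinv : C R⁻¹ * C R = (1 : F[X]) := by
    rw [← C_mul, inv_mul_cancel₀ hR, C_1]
  exact ⟨C R⁻¹ * p, C R⁻¹ * q, by rw [mul_assoc, mul_assoc, ← mul_add, key, hinv]⟩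

theorem is212_iff (h2 : (2 : F) = 0) {α : F} (hα : α ^ 3 + α + 1 = 0) {a b c : F} (ha : a ≠ 0)
    (hb : b ≠ 0) (hc : c ≠ 0) {u v w : K} (hu : u ≠ kzero) (hv : v ≠ kzero) (hw : w ≠ kzero) :
    Is212 2 (a * c ^ 2 * phi α u) (a * c) a (b * c ^ 2 * phi α w) (b * c * phi α v) b ↔
      Good u v w := by
  have hminor : CompleteJMDP 2 1 2 (by norm_num) (by norm_num)
      (Htriple (a * c ^ 2 * phi α u) (a * c) a (b * c ^ 2 * phi α w) (b * c * phi α v) b) 2 ↔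
      Good u v w := by
    rw [completeJMDP_iff]
    simp only [det_scaled_ne_zero_iff ha hb hc, det_phi h2 hα, ne_eq, phi_eq_zero h2 hα, Good,
      hu, hv, hw, not_false_eq_true, true_and]
  refine ⟨fun h => hminor.1 h.2, fun h => ⟨isCoprime_hpoly ?_, hminor.2 h⟩⟩
  have hres : phi α (kres u v w) ≠ 0 := fun h0 => good_res u v w h ((phi_eq_zero h2 hα).1 h0)
  have e : (a * (b * c ^ 2 * phi α w) - a * c ^ 2 * phi α u * b) ^ 2 -
      (a * (b * c * phi α v) - a * c * b) *
        (a * c * (b * c ^ 2 * phi α w) - a * c ^ 2 * phi α u * (b * c * phi α v)) =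
      a ^ 2 * b ^ 2 * c ^ 4 * phi α (kres u v w) := by
    simp only [kres, phi_add h2, phi_mul h2 hα, phi_one]
    have hneg : ∀ x y : F, x - y = x + y := fun x y => by linear_combination -y * h2
    simp only [hneg]
    ring
  rw [e]
  positivity

end Model

end F8Count

open F8Count

/-- Over `F_8 = F_2[X]/(X³+X+1)` (with `α` the class of `X`), the number
of tuples `(H_2, H_1, H_0)` with all six entries nonzero such that `h_1` and `h_2` are
coprime and the complete `2`-MDP minor condition holds is exactly `126 · 7² = 6174`;
an example is `H_2 = [1, 1]`, `H_1 = [1, α]`, `H_0 = [α+1, α+1]`. -/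
theorem stmt11 (F : Type*) [Field F] [Fintype F] (hF : Fintype.card F = 8)
    (α : F) (hα : α ^ 3 + α + 1 = 0) :
    Nat.card {x : F × F × F × F × F × F //
      x.1 ≠ 0 ∧ x.2.1 ≠ 0 ∧ x.2.2.1 ≠ 0 ∧ x.2.2.2.1 ≠ 0 ∧ x.2.2.2.2.1 ≠ 0 ∧
      x.2.2.2.2.2 ≠ 0 ∧
      Is212 2 x.1 x.2.1 x.2.2.1 x.2.2.2.1 x.2.2.2.2.1 x.2.2.2.2.2} = 6174 ∧
    Is212 2 (α + 1) 1 1 (α + 1) α 1 := by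
  have h2 : (2 : F) = 0 := by
    have h8 : ((8 : ℕ) : F) = 0 := by rw [← hF]; exact FiniteField.cast_card_eq_zero F
    have : (2 : F) ^ 3 = 0 := by push_cast at h8; linear_combination h8
    exact pow_eq_zero_iff (by norm_num) |>.1 this
  have hbij := phi_bijective hF h2 hα
  have hne : ∀ {x : K}, x ≠ kzero ↔ phi α x ≠ 0 := (phi_eq_zero h2 hα).not.symm
  constructor
  -- `f` parametrizes all good tuples by the scalars `(a, b, c)` and the good normalized triples.
  · let f : (Fˣ × Fˣ × Fˣ) × {t : K × K × K // Good t.1 t.2.1 t.2.2} →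
        {x : F × F × F × F × F × F //
          x.1 ≠ 0 ∧ x.2.1 ≠ 0 ∧ x.2.2.1 ≠ 0 ∧ x.2.2.2.1 ≠ 0 ∧ x.2.2.2.2.1 ≠ 0 ∧
          x.2.2.2.2.2 ≠ 0 ∧
          Is212 2 x.1 x.2.1 x.2.2.1 x.2.2.2.1 x.2.2.2.2.1 x.2.2.2.2.2} := fun p =>
      ⟨(p.1.1 * p.1.2.2 ^ 2 * phi α p.2.1.1, p.1.1 * p.1.2.2, p.1.1,
        p.1.2.1 * p.1.2.2 ^ 2 * phi α p.2.1.2.2, p.1.2.1 * p.1.2.2 * phi α p.2.1.2.1, p.1.2.1), by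
        obtain ⟨⟨a, b, c⟩, ⟨⟨u, v, w⟩, hg⟩⟩ := p
        have ha := a.ne_zero
        have hb := b.ne_zero
        have hc := c.ne_zero
        have hu := hne.1 hg.1
        have hv := hne.1 hg.2.1
        have hw := hne.1 hg.2.2.1
        refine ⟨?_, ?_, ha, ?_, ?_, hb,
          (is212_iff h2 hα ha hb hc hg.1 hg.2.1 hg.2.2.1).2 hg⟩ <;> positivity⟩
    have hf : Function.Bijective f := by
      constructor
      · rintro ⟨⟨a, b, c⟩, ⟨⟨u, v, w⟩, hg⟩⟩ ⟨⟨a', b', c'⟩, ⟨⟨u', v', w'⟩, hg'⟩⟩ h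
        have h' := congrArg Subtype.val h
        simp only [f, Prod.mk.injEq, Units.val_inj] at h'
        obtain ⟨e1, e2, rfl, e4, e5, rfl⟩ := h'
        have hc : c = c' := Units.ext (mul_left_cancel₀ a.ne_zero e2)
        subst hc
        have hu : u = u' := hbij.1 (mul_left_cancel₀ (by simp) e1)
        have hw : w = w' := hbij.1 (mul_left_cancel₀ (by simp) e4)
        have hv : v = v' := hbij.1 (mul_left_cancel₀ (by simp) e5)
        subst hu hv hw
        rfl
      · rintro ⟨⟨x0, x1, x2, y0, y1, y2⟩, n0, n1, n2, m0, m1, m2, hI⟩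
        simp only at n0 n1 n2 m0 m1 m2 hI
        -- The equations `x1 = a * c`, `x0 = a * c² * u`, `y1 = b * c * v`, `y0 = b * c² * w`
        -- with `a = x2`, `b = y2` determine the parameters.
        obtain ⟨u, hu⟩ := hbij.2 (x0 * x2 / x1 ^ 2)
        obtain ⟨v, hv⟩ := hbij.2 (y1 * x2 / (y2 * x1))
        obtain ⟨w, hw⟩ := hbij.2 (y0 * x2 ^ 2 / (y2 * x1 ^ 2))
        have hc : x1 / x2 ≠ 0 := div_ne_zero n1 n2
        have e0 : x2 * (x1 / x2) ^ 2 * phi α u = x0 := by rw [hu]; field_simp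
        have e1 : x2 * (x1 / x2) = x1 := by field_simp
        have e3 : y2 * (x1 / x2) ^ 2 * phi α w = y0 := by rw [hw]; field_simp
        have e4 : y2 * (x1 / x2) * phi α v = y1 := by rw [hv]; field_simp
        have zu : u ≠ kzero := hne.2 (by rw [hu]; positivity)
        have zv : v ≠ kzero := hne.2 (by rw [hv]; positivity)
        have zw : w ≠ kzero := hne.2 (by rw [hw]; positivity)
        have hg : Good u v w := by
          rw [← is212_iff h2 hα n2 m2 hc zu zv zw, e0, e1, e3, e4]
          exact hI
        refine ⟨((Units.mk0 x2 n2, Units.mk0 y2 m2, Units.mk0 _ hc), ⟨(u, v, w), hg⟩), ?_⟩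
        apply Subtype.ext
        simp only [f, Units.val_mk0, e0, e1, e3, e4]
    have hunits : Nat.card Fˣ = 7 := by
      rw [Nat.card_units, Nat.card_eq_fintype_card, hF]
    rw [← Nat.card_congr (Equiv.ofBijective f hf)]
    simp only [Nat.card_prod, hunits]
    rw [Nat.card_eq_fintype_card, card_good]
  · have h := (is212_iff h2 hα (one_ne_zero (α := F)) one_ne_zero one_ne_zero (by decide)
      (by decide) (by decide)).2 good_example
    have e1 : phi α (true, true, false) = α + 1 := by simp [phi, bit, add_comm]
    have e2 : phi α (false, true, false) = α := by simp [phi, bit]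
    simpa only [e1, e2, one_mul, one_pow] using h
end

section
/- For every r ∈ {1, 2, 3}, there exists no (2,1,2) complete 3-MDP convolutional code over the field F_{2^r} with 2^r elements: there is no triple (H_2, H_1, H_0) of row vectors in F_{2^r}^{1×2} such that h_1 and h_2 are coprime in F_{2^r}[z] and the complete 3-MDP minor condition holds. In particular, the minimum binary field size for a (2,1,2) complete MDP convolutional code is at least 16. -/
/-!
In characteristic `2`, scaling `h_1`, `h_2` and the variable `z` brings a complete `3`-MDP pair to
the form `h_1 = x + z + z²`, `h_2 = w + y z + z²`, since the minors force the coefficients `h_{1,2}`,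
`h_{2,2}`, `h_{1,1}` to be nonzero (`normalizedMinors`). The minors `x`, `1 + x` and `1 + x + x²`
must be nonzero, whereas `x (1 + x) = x² - x` vanishes over `F_2` and
`x (1 + x) (1 + x + x²) = x⁴ - x` vanishes over `F_4`.

Over `F_8` the element `x` has minimal polynomial `X³ + X + 1` or `X³ + X² + 1`, and `1, x, x²` is a
basis over `F_2` (`span8`). The minors in `x, y` alone leave
`y ∈ {1 + x, x², x² + 1, x² + x + 1}`. With `u = w / y`, the minors linear in `w` exclude
`u ∈ {0, 1, x, y}`, and also `u ∈ {x + 1, x + y}`. Each of the ten remaining pairs `(y, u)` is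
excluded by one minor for each of the two minimal polynomials
(`not_normalizedMinors_of_card_eq_eight`).
-/

open Polynomial

/-- The partial parity-check matrix `𝔥_3` of a `(2,1,2)` code, written out: `aᵢ` and `bᵢ` are
the coefficients of `zⁱ` in `h_1` and `h_2`. -/
def slidingMatrix {F : Type*} [Field F] (a₀ a₁ a₂ b₀ b₁ b₂ : F) : Matrix (Fin 4) (Fin 12) F :=
  !![a₂, b₂, a₁, b₁, a₀, b₀, 0, 0, 0, 0, 0, 0;
     0, 0, a₂, b₂, a₁, b₁, a₀, b₀, 0, 0, 0, 0;
     0, 0, 0, 0, a₂, b₂, a₁, b₁, a₀, b₀, 0, 0;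
     0, 0, 0, 0, 0, 0, a₂, b₂, a₁, b₁, a₀, b₀]

theorem pcm_eq {F : Type*} [Field F] (a₀ a₁ a₂ b₀ b₁ b₂ : F) :
    pcm 2 1 2 (by norm_num) (by norm_num) (Htriple a₀ a₁ a₂ b₀ b₁ b₂) 3 =
      slidingMatrix a₀ a₁ a₂ b₀ b₁ b₂ := by
  ext p q
  change Fin 4 at p
  change Fin 12 at q
  fin_cases p <;> fin_cases q <;> rfl

/-- The complete `3`-MDP condition read off on the explicit matrix. Columns are `0`-based. -/
theorem minor_ne_zero {F : Type*} [Field F] {a₀ a₁ a₂ b₀ b₁ b₂ : F}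
    (h : CompleteJMDP 2 1 2 (by norm_num) (by norm_num) (Htriple a₀ a₁ a₂ b₀ b₁ b₂) 3)
    (i j k l : Fin 12) (hij : i < j ∧ j < k ∧ k < l)
    (hl : 2 ≤ j ∧ 4 ≤ k ∧ 6 ≤ l) (hu : i < 6 ∧ j < 8 ∧ k < 10) :
    ((slidingMatrix a₀ a₁ a₂ b₀ b₁ b₂).submatrix id ![i, j, k, l]).det ≠ 0 := by
  have key := h ![i, j, k, l] ⟨?_, ?_⟩
  · rw [pcm_eq] at key
    exact key
  · obtain ⟨h1, h2, h3⟩ := hij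
    refine (Fin.strictMono_iff_lt_succ (n := 3) (f := ![i, j, k, l])).2 fun s => ?_
    fin_cases s <;> assumption
  · intro s hs1 hs3 _ _
    obtain ⟨l1, l2, l3⟩ := hl
    obtain ⟨u1, u2, u3⟩ := hu
    interval_cases s
    · exact ⟨l1, u1⟩
    · exact ⟨l2, u2⟩
    · exact ⟨l3, u3⟩

/-- The part of the complete `3`-MDP condition that is needed, for a code over a field of
characteristic `2` normalised to `h_1 = x + z + z²` and `h_2 = w + y z + z²`. Each field is
a factor of one admissible minor, whose other factors are powers of coefficients; signs are
irrelevant. The field names list the four `1`-based columns. -/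
structure NormalizedMinors {F : Type*} [Field F] (x y w : F) : Prop where
  m_1_3_5_10 : y ≠ 0
  m_5_7_9_11 : x ≠ 0
  m_6_8_10_12 : w ≠ 0
  m_1_3_7_8 : 1 + y ≠ 0
  m_1_3_7_9 : 1 + x ≠ 0
  m_1_3_8_9 : x + y ≠ 0
  m_3_5_7_9 : 1 + x + x ^ 2 ≠ 0
  m_4_5_7_9 : x + x ^ 2 + y ≠ 0
  m_1_3_7_10 : w + y ≠ 0
  m_1_3_8_10 : w + y ^ 2 ≠ 0
  m_1_3_9_10 : w + x * y ≠ 0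
  m_1_5_7_10 : w + x * y + y ≠ 0
  m_1_6_8_9 : w + x * y + y ^ 2 ≠ 0
  m_3_5_7_10 : w + x * w + y ≠ 0
  m_4_6_8_9 : x * w + x * y ^ 2 + y ^ 3 ≠ 0
  m_4_5_7_10 : x * w + x * y + x * y ^ 2 + y ^ 2 + y * w ≠ 0
  m_3_6_8_9 : w + x * w + x * y + y ^ 2 + y * w ≠ 0
  m_3_6_7_9 : w + x + x * w + x * y + y ≠ 0
  m_3_6_8_10 : w ^ 2 + y ^ 2 * w + y ^ 3 ≠ 0
  m_5_6_7_10 : w ^ 2 + x ^ 2 * y + x * y ^ 2 + y * w ≠ 0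
  m_4_6_7_10 : w ^ 2 + x * y ^ 2 + y ^ 2 * w + y ^ 3 + y * w ≠ 0

set_option maxHeartbeats 2000000 in
/-- Reading off the minors after the substitution `h_1(z) = a s² (x + z/s + (z/s)²)` and
`h_2(z) = b s² (w + y z/s + (z/s)²)`. -/
theorem normalizedMinors {F : Type*} [Field F] [CharP F 2] {s a b x y w : F}
    (h : CompleteJMDP 2 1 2 (by norm_num) (by norm_num)
      (Htriple (x * s ^ 2 * a) (s * a) a (w * s ^ 2 * b) (y * s * b) b) 3) :
    NormalizedMinors x y w := by
  have minor := minor_ne_zero h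
  have two : (2 : F) = 0 := CharTwo.two_eq_zero
  constructor
  · exact fun e => minor 0 2 4 9 (by decide) (by decide) (by decide) (by
      simp [slidingMatrix, Matrix.det_succ_row_zero, Fin.sum_univ_succ, Fin.succAbove]; grind)
  · exact fun e => minor 4 6 8 10 (by decide) (by decide) (by decide) (by
      simp [slidingMatrix, Matrix.det_succ_row_zero, Fin.sum_univ_succ, Fin.succAbove]; grind)
  · exact fun e => minor 5 7 9 11 (by decide) (by decide) (by decide) (by
      simp [slidingMatrix, Matrix.det_succ_row_zero, Fin.sum_univ_succ, Fin.succAbove]; grind)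
  · exact fun e => minor 0 2 6 7 (by decide) (by decide) (by decide) (by
      simp [slidingMatrix, Matrix.det_succ_row_zero, Fin.sum_univ_succ, Fin.succAbove]; grind)
  · exact fun e => minor 0 2 6 8 (by decide) (by decide) (by decide) (by
      simp [slidingMatrix, Matrix.det_succ_row_zero, Fin.sum_univ_succ, Fin.succAbove]; grind)
  · exact fun e => minor 0 2 7 8 (by decide) (by decide) (by decide) (by
      simp [slidingMatrix, Matrix.det_succ_row_zero, Fin.sum_univ_succ, Fin.succAbove]; grind)
  · exact fun e => minor 2 4 6 8 (by decide) (by decide) (by decide) (by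
      simp [slidingMatrix, Matrix.det_succ_row_zero, Fin.sum_univ_succ, Fin.succAbove]; grind)
  · exact fun e => minor 3 4 6 8 (by decide) (by decide) (by decide) (by
      simp [slidingMatrix, Matrix.det_succ_row_zero, Fin.sum_univ_succ, Fin.succAbove]; grind)
  · exact fun e => minor 0 2 6 9 (by decide) (by decide) (by decide) (by
      simp [slidingMatrix, Matrix.det_succ_row_zero, Fin.sum_univ_succ, Fin.succAbove]; grind)
  · exact fun e => minor 0 2 7 9 (by decide) (by decide) (by decide) (by
      simp [slidingMatrix, Matrix.det_succ_row_zero, Fin.sum_univ_succ, Fin.succAbove]; grind)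
  · exact fun e => minor 0 2 8 9 (by decide) (by decide) (by decide) (by
      simp [slidingMatrix, Matrix.det_succ_row_zero, Fin.sum_univ_succ, Fin.succAbove]; grind)
  · exact fun e => minor 0 4 6 9 (by decide) (by decide) (by decide) (by
      simp [slidingMatrix, Matrix.det_succ_row_zero, Fin.sum_univ_succ, Fin.succAbove]; grind)
  · exact fun e => minor 0 5 7 8 (by decide) (by decide) (by decide) (by
      simp [slidingMatrix, Matrix.det_succ_row_zero, Fin.sum_univ_succ, Fin.succAbove]; grind)
  · exact fun e => minor 2 4 6 9 (by decide) (by decide) (by decide) (by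
      simp [slidingMatrix, Matrix.det_succ_row_zero, Fin.sum_univ_succ, Fin.succAbove]; grind)
  · exact fun e => minor 3 5 7 8 (by decide) (by decide) (by decide) (by
      simp [slidingMatrix, Matrix.det_succ_row_zero, Fin.sum_univ_succ, Fin.succAbove]; grind)
  · exact fun e => minor 3 4 6 9 (by decide) (by decide) (by decide) (by
      simp [slidingMatrix, Matrix.det_succ_row_zero, Fin.sum_univ_succ, Fin.succAbove]; grind)
  · exact fun e => minor 2 5 7 8 (by decide) (by decide) (by decide) (by
      simp [slidingMatrix, Matrix.det_succ_row_zero, Fin.sum_univ_succ, Fin.succAbove]; grind)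
  · exact fun e => minor 2 5 6 8 (by decide) (by decide) (by decide) (by
      simp [slidingMatrix, Matrix.det_succ_row_zero, Fin.sum_univ_succ, Fin.succAbove]; grind)
  · exact fun e => minor 2 5 7 9 (by decide) (by decide) (by decide) (by
      simp [slidingMatrix, Matrix.det_succ_row_zero, Fin.sum_univ_succ, Fin.succAbove]; grind)
  · exact fun e => minor 4 5 6 9 (by decide) (by decide) (by decide) (by
      simp [slidingMatrix, Matrix.det_succ_row_zero, Fin.sum_univ_succ, Fin.succAbove]; grind)
  · exact fun e => minor 3 5 6 9 (by decide) (by decide) (by decide) (by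
      simp [slidingMatrix, Matrix.det_succ_row_zero, Fin.sum_univ_succ, Fin.succAbove]; grind)

/-- In a field with eight elements, any `x` outside `{0, 1}` has `1, x, x²` as a basis over the
prime field. The hypothesis `1 + x + x² ≠ 0` holds there automatically, but is also one of the
minor conditions. -/
theorem span8 {F : Type*} [Field F] [Fintype F] [CharP F 2] (hF : Fintype.card F = 8) (x : F)
    (h0 : x ≠ 0) (h1 : 1 + x ≠ 0) (h2 : 1 + x + x ^ 2 ≠ 0) (y : F) :
    y = 0 ∨ y = 1 ∨ y = x ∨ y = 1 + x ∨
      y = x ^ 2 ∨ y = x ^ 2 + 1 ∨ y = x ^ 2 + x ∨ y = x ^ 2 + x + 1 := by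
  classical
  have two : (2 : F) = 0 := CharTwo.two_eq_zero
  have hu : ({0, 1, x, 1 + x, x ^ 2, x ^ 2 + 1, x ^ 2 + x, x ^ 2 + x + 1} : Finset F)
      = Finset.univ := by
    apply Finset.eq_univ_of_card
    rw [hF]
    repeat rw [Finset.card_insert_of_notMem (by
      simp only [Finset.mem_insert, Finset.mem_singleton]; grind)]
    simp
  have hy := Finset.mem_univ y
  rw [← hu] at hy
  simpa only [Finset.mem_insert, Finset.mem_singleton] using hy


/-- With `u = w / y`, the elements `y` and `u` are among the eight `F_2`-combinations of `1, x, x²`.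
Each pair is excluded by a minor, whose choice may depend on the minimal polynomial of `x`, either
`X³ + X + 1` or `X³ + X² + 1`. -/
theorem not_normalizedMinors_of_card_eq_eight {F : Type*} [Field F] [Fintype F] [CharP F 2]
    (hF : Fintype.card F = 8) (x y w : F) : ¬ NormalizedMinors x y w := by
  intro h
  have two : (2 : F) = 0 := CharTwo.two_eq_zero
  obtain ⟨u, rfl⟩ : ∃ u, w = y * u := ⟨w / y, by have := h.m_1_3_5_10; field_simp⟩
  have h8 : x ^ 8 = x := hF ▸ FiniteField.pow_card x
  have hmin : x ^ 3 = x + 1 ∨ x ^ 3 = x ^ 2 + 1 := by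
    have : x * (1 + x) * ((x ^ 3 - (x + 1)) * (x ^ 3 - (x ^ 2 + 1))) = 0 := by grind
    simpa [h.m_5_7_9_11, h.m_1_3_7_9, sub_eq_zero] using this
  clear h8
  have span := span8 hF x h.m_5_7_9_11 h.m_1_3_7_9 h.m_3_5_7_9
  rcases span y with rfl | rfl | rfl | rfl | rfl | rfl | rfl | rfl
  · exact h.m_1_3_5_10 rfl
  · exact h.m_1_3_7_8 (by grind)
  · exact h.m_1_3_8_9 (by grind)
  · rcases span u with rfl | rfl | rfl | rfl | rfl | rfl | rfl | rfl
    · exact h.m_6_8_10_12 (by grind)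
    · exact h.m_1_3_7_10 (by grind)
    · exact h.m_1_3_9_10 (by grind)
    · exact h.m_1_3_8_10 (by grind)
    · exact hmin.elim (fun m => h.m_4_6_8_9 (by grind)) (fun m => h.m_3_5_7_10 (by grind))
    · exact hmin.elim (fun m => h.m_3_6_7_9 (by grind)) (fun m => h.m_4_6_7_10 (by grind))
    · exact hmin.elim (fun m => h.m_3_5_7_10 (by grind)) (fun m => h.m_5_6_7_10 (by grind))
    · exact hmin.elim (fun m => h.m_4_5_7_10 (by grind)) (fun m => h.m_4_6_8_9 (by grind))
  · rcases span u with rfl | rfl | rfl | rfl | rfl | rfl | rfl | rfl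
    · exact h.m_6_8_10_12 (by grind)
    · exact h.m_1_3_7_10 (by grind)
    · exact h.m_1_3_9_10 (by grind)
    · exact h.m_1_5_7_10 (by grind)
    · exact h.m_1_3_8_10 (by grind)
    · exact hmin.elim (fun m => h.m_3_6_8_9 (by grind)) (fun m => h.m_5_6_7_10 (by grind))
    · exact h.m_1_6_8_9 (by grind)
    · exact hmin.elim (fun m => h.m_4_6_8_9 (by grind)) (fun m => h.m_3_6_8_10 (by grind))
  · rcases span u with rfl | rfl | rfl | rfl | rfl | rfl | rfl | rfl
    · exact h.m_6_8_10_12 (by grind)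
    · exact h.m_1_3_7_10 (by grind)
    · exact h.m_1_3_9_10 (by grind)
    · exact h.m_1_5_7_10 (by grind)
    · exact hmin.elim (fun m => h.m_3_6_7_9 (by grind)) (fun m => h.m_3_5_7_10 (by grind))
    · exact h.m_1_3_8_10 (by grind)
    · exact hmin.elim (fun m => h.m_3_5_7_10 (by grind)) (fun m => h.m_4_6_8_9 (by grind))
    · exact h.m_1_6_8_9 (by grind)
  · exact h.m_4_5_7_9 (by grind)
  · rcases span u with rfl | rfl | rfl | rfl | rfl | rfl | rfl | rfl
    · exact h.m_6_8_10_12 (by grind)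
    · exact h.m_1_3_7_10 (by grind)
    · exact h.m_1_3_9_10 (by grind)
    · exact h.m_1_5_7_10 (by grind)
    · exact hmin.elim (fun m => h.m_3_6_8_10 (by grind)) (fun m => h.m_3_5_7_10 (by grind))
    · exact h.m_1_6_8_9 (by grind)
    · exact hmin.elim (fun m => h.m_3_5_7_10 (by grind)) (fun m => h.m_4_6_8_9 (by grind))
    · exact h.m_1_3_8_10 (by grind)

/-- For every `r ∈ {1, 2, 3}`, there exists no `(2,1,2)` complete
`3`-MDP convolutional code over the field with `2^r` elements. -/
theorem stmt15 (F : Type*) [Field F] [Fintype F] (r : ℕ) (hr : r ∈ ({1, 2, 3} : Set ℕ))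
    (hF : Fintype.card F = 2 ^ r) :
    ¬ ∃ h10 h11 h12 h20 h21 h22 : F, Is212 3 h10 h11 h12 h20 h21 h22 := by
  rintro ⟨a₀, a₁, a₂, b₀, b₁, b₂, -, h⟩
  have : CharP F 2 := charP_of_card_eq_prime_pow hF
  have two : (2 : F) = 0 := CharTwo.two_eq_zero
  have ha₂ : a₂ ≠ 0 := fun e => minor_ne_zero h 0 2 4 6 (by decide) (by decide) (by decide) (by
    simp [slidingMatrix, Matrix.det_succ_row_zero, Fin.sum_univ_succ, Fin.succAbove, e])
  have hb₂ : b₂ ≠ 0 := fun e => minor_ne_zero h 1 3 5 7 (by decide) (by decide) (by decide) (by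
    simp [slidingMatrix, Matrix.det_succ_row_zero, Fin.sum_univ_succ, Fin.succAbove, e])
  have ha₁ : a₁ ≠ 0 := fun e => minor_ne_zero h 0 2 4 8 (by decide) (by decide) (by decide) (by
    simp [slidingMatrix, Matrix.det_succ_row_zero, Fin.sum_univ_succ, Fin.succAbove, e])
  -- `z` is rescaled by `s = a₁ / a₂`, which makes the two top coefficients of `h_1` equal.
  obtain ⟨s, rfl⟩ : ∃ s, a₁ = s * a₂ := ⟨a₁ / a₂, by field_simp⟩
  have hs : s ≠ 0 := left_ne_zero_of_mul ha₁
  obtain ⟨x, rfl⟩ : ∃ x, a₀ = x * s ^ 2 * a₂ := ⟨a₀ / (s ^ 2 * a₂), by field_simp⟩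
  obtain ⟨y, rfl⟩ : ∃ y, b₁ = y * s * b₂ := ⟨b₁ / (s * b₂), by field_simp⟩
  obtain ⟨w, rfl⟩ : ∃ w, b₀ = w * s ^ 2 * b₂ := ⟨b₀ / (s ^ 2 * b₂), by field_simp⟩
  have hm : NormalizedMinors x y w := normalizedMinors h
  have hx := hm.m_5_7_9_11
  have hx1 := hm.m_1_3_7_9
  have hx2 := hm.m_3_5_7_9
  have hpow := FiniteField.pow_card x
  rw [hF] at hpow
  rcases hr with rfl | rfl | rfl
  · have : x * (1 + x) = 0 := by grind
    simp_all
  · have : x * (1 + x) * (1 + x + x ^ 2) = 0 := by grind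
    simp_all
  · exact not_normalizedMinors_of_card_eq_eight hF x y w hm
end

section
/- For every odd prime power q with q ≤ 11 (i.e. q ∈ {3, 5, 7, 9, 11}), there exists no (2,1,2) complete 3-MDP convolutional code over the field F_q with q elements: there is no triple (H_2, H_1, H_0) of row vectors in F_q^{1×2} such that h_1 and h_2 are coprime in F_q[z] and the complete 3-MDP minor condition holds. Consequently, there is also no (2,1,2) complete MDP (= complete 4-MDP) convolutional code over any such F_q. -/
/-!
The complete `4`-MDP condition implies the complete `3`-MDP condition: prepending a column of the
first block to a shifted admissible choice turns every admissible `4 × 4` minor of `𝔥_3` into a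
cofactor of an admissible `5 × 5` minor of `𝔥_4` (`completeJMDP_three_of_four`). So only `j = 3`
matters.

For `j = 3`, some admissible minors are `h_{1,2}^4`, `h_{2,2}^4` and a multiple of `h_{1,1}`, so
these three coefficients are nonzero. Rescaling the columns and substituting `z ↦ tz` then reduces
to `h_1 = z² + z + b` and `h_2 = z² + pz + q` (`completeJMDP_normalize`). For this shape the
admissible minors are explicit polynomials in `b`, `p`, `q`, and 26 of them already have the
property `Obstructed`: at every point `(b, p, q)` at least one vanishes. This is a finite check over
`ZMod 3`, `ZMod 5`, `ZMod 7`, `ZMod 11` and the model `𝔽₃[i]` of the field with nine elements, and it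
transfers to an arbitrary field of the same cardinality along a ring isomorphism.
-/


open Polynomial

/-! ### Minors of the partial parity-check matrix -/

theorem admissible_three (js : Fin 4 → Fin 12)
    (h : js 0 < js 1 ∧ js 1 < js 2 ∧ js 2 < js 3 ∧ 2 ≤ js 1 ∧ 4 ≤ js 2 ∧ 6 ≤ js 3 ∧
      js 0 < 6 ∧ js 1 < 8 ∧ js 2 < 10) : Admissible 2 1 2 3 js := by
  obtain ⟨h1, h2, h3, h4, h5, h6, h7, h8, h9⟩ := h
  refine ⟨Fin.strictMono_iff_lt_succ.2 fun i => by fin_cases i <;> assumption, ?_⟩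
  intro s hs1 hs2 _ _
  interval_cases s
  · exact ⟨h4, h7⟩
  · exact ⟨h5, h8⟩
  · exact ⟨h6, h9⟩

/-- Laplace expansion of a `4 × 4` determinant along its first two rows. -/
theorem det_four {R : Type*} [CommRing R] (A : Matrix (Fin 4) (Fin 4) R) :
    A.det =
      (A 0 0 * A 1 1 - A 0 1 * A 1 0) * (A 2 2 * A 3 3 - A 2 3 * A 3 2)
      - (A 0 0 * A 1 2 - A 0 2 * A 1 0) * (A 2 1 * A 3 3 - A 2 3 * A 3 1)
      + (A 0 0 * A 1 3 - A 0 3 * A 1 0) * (A 2 1 * A 3 2 - A 2 2 * A 3 1)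
      + (A 0 1 * A 1 2 - A 0 2 * A 1 1) * (A 2 0 * A 3 3 - A 2 3 * A 3 0)
      - (A 0 1 * A 1 3 - A 0 3 * A 1 1) * (A 2 0 * A 3 2 - A 2 2 * A 3 0)
      + (A 0 2 * A 1 3 - A 0 3 * A 1 2) * (A 2 0 * A 3 1 - A 2 1 * A 3 0) := by
  simp [Matrix.det_succ_row_zero, Fin.sum_univ_succ, Fin.succAbove]
  ring

/-- The entry of `𝔥_j` in row `r` and column `c` (both counted from `0`) for
`h_1 = a0 + a1 z + a2 z²` and `h_2 = b0 + b1 z + b2 z²`: row `r` reads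
`a2, b2, a1, b1, a0, b0` from column `2r` on, and is zero elsewhere. -/
def parityEntry {R : Type*} [Zero R] (a0 a1 a2 b0 b1 b2 : R) (r c : ℕ) : R :=
  if c = 2 * r then a2 else if c = 2 * r + 1 then b2
  else if c = 2 * r + 2 then a1 else if c = 2 * r + 3 then b1
  else if c = 2 * r + 4 then a0 else if c = 2 * r + 5 then b0 else 0

theorem pcm_eq_parityEntry {F : Type*} [Field F] (a0 a1 a2 b0 b1 b2 : F) (r : Fin 4) (c : Fin 12) :
    pcm 2 1 2 (by norm_num) (by norm_num) (Htriple a0 a1 a2 b0 b1 b2) 3 r c =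
      parityEntry a0 a1 a2 b0 b1 b2 r c := by
  fin_cases r <;> fin_cases c <;> rfl

/-- The complete `3`-MDP condition, with admissibility of the columns `js 0, …, js 3` spelled out as
a decidable list of inequalities. -/
theorem minor_ne_zero_s16 {F : Type*} [Field F] {a0 a1 a2 b0 b1 b2 : F}
    (h : CompleteJMDP 2 1 2 (by norm_num) (by norm_num) (Htriple a0 a1 a2 b0 b1 b2) 3)
    (js : Fin 4 → Fin 12)
    (hjs : js 0 < js 1 ∧ js 1 < js 2 ∧ js 2 < js 3 ∧ 2 ≤ js 1 ∧ 4 ≤ js 2 ∧ 6 ≤ js 3 ∧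
      js 0 < 6 ∧ js 1 < 8 ∧ js 2 < 10) :
    (Matrix.of fun r s : Fin 4 => parityEntry a0 a1 a2 b0 b1 b2 r (js s)).det ≠ 0 := by
  have hminor := h js (admissible_three js hjs)
  rwa [show (pcm 2 1 2 (by norm_num) (by norm_num) (Htriple a0 a1 a2 b0 b1 b2) 3).submatrix id js
    = Matrix.of fun r s : Fin 4 => parityEntry a0 a1 a2 b0 b1 b2 r (js s) from by
      ext r s; exact pcm_eq_parityEntry a0 a1 a2 b0 b1 b2 r (js s)] at hminor

/-! ### Reduction to a normal form -/

/-- If `h_1 = u (z² + t z + b t²)` and `h_2 = v (z² + p t z + q t²)`, then `𝔥_3` arises from the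
matrix of `z² + z + b` and `z² + p z + q` by multiplying row `r` by `t^(-r)` and the two columns of
block `c` by `t^c u` and `t^c v`, so nonvanishing of minors passes to the latter. -/
theorem completeJMDP_normalize {F : Type*} [Field F] {b p q t u v : F} (ht : t ≠ 0)
    (h : CompleteJMDP 2 1 2 (by norm_num) (by norm_num)
      (Htriple (b * t ^ 2 * u) (t * u) u (q * t ^ 2 * v) (p * t * v) v) 3) :
    CompleteJMDP 2 1 2 (by norm_num) (by norm_num) (Htriple b 1 1 q p 1) 3 := by
  intro js hjs h0
  let w : Fin 12 → F := fun c => t ^ ((c : ℕ) / 2) * if (c : ℕ) % 2 = 0 then u else v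
  have key : ∀ (r : Fin 4) (c : Fin 12),
      t ^ (r : ℕ) * pcm 2 1 2 (by norm_num) (by norm_num)
        (Htriple (b * t ^ 2 * u) (t * u) u (q * t ^ 2 * v) (p * t * v) v) 3 r c =
      w c * pcm 2 1 2 (by norm_num) (by norm_num) (Htriple b 1 1 q p 1) 3 r c := by
    intro r c
    rw [pcm_eq_parityEntry, pcm_eq_parityEntry]
    fin_cases r <;> fin_cases c <;> simp [w, parityEntry] <;> ring
  apply h js hjs
  have hrow := Matrix.det_mul_row (fun s => w (js s))
    ((pcm 2 1 2 (by norm_num) (by norm_num) (Htriple b 1 1 q p 1) 3).submatrix id js)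
  have hcol := Matrix.det_mul_column (fun r : Fin 4 => t ^ (r : ℕ))
    ((pcm 2 1 2 (by norm_num) (by norm_num)
       (Htriple (b * t ^ 2 * u) (t * u) u (q * t ^ 2 * v) (p * t * v) v) 3).submatrix id js)
  rw [h0, mul_zero] at hrow
  refine (mul_eq_zero.1 ((hcol.symm.trans ?_).trans hrow)).resolve_left
    (Finset.prod_ne_zero_iff.2 fun r _ => pow_ne_zero _ ht)
  congr 1
  ext r s
  exact key r (js s)

/-- Prepending a column of block `0` and shifting the others by one block maps admissible choices
for `𝔥_3` to admissible choices for `𝔥_4`. The prepended column has at most one nonzero entry, and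
its cofactor is the original minor. -/
theorem completeJMDP_three_of_four {F : Type*} [Field F]
    {H : Fin (2 + 1) → Matrix (Fin (2 - 1)) (Fin 2) F}
    (h : CompleteJMDP 2 1 2 (by norm_num) (by norm_num) H 4) :
    CompleteJMDP 2 1 2 (by norm_num) (by norm_num) H 3 := by
  intro js hjs h0
  let cols : Fin 4 → Fin 12 := js
  have hmono : StrictMono cols := hjs.1
  let e : Fin 5 → Fin 14 := Fin.cons 0 fun i => (cols i).natAdd 2
  have he : ∀ i : Fin 4, (e i.succ : ℕ) = cols i + 2 := fun i => by simp [e, add_comm]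
  have hb := fun s h1 h2 => hjs.2 s h1 h2 (by omega) (by omega)
  have h1 : 2 ≤ (cols 1 : ℕ) ∧ (cols 0 : ℕ) < 6 := hb 1 (by norm_num) (by norm_num)
  have h2 : 4 ≤ (cols 2 : ℕ) ∧ (cols 1 : ℕ) < 8 := hb 2 (by norm_num) (by norm_num)
  have h3 : 6 ≤ (cols 3 : ℕ) ∧ (cols 2 : ℕ) < 10 := hb 3 (by norm_num) (by norm_num)
  have e0 : (e 0 : ℕ) = 0 := rfl
  have e1 : (e 1 : ℕ) = cols 0 + 2 := he 0
  have e2 : (e 2 : ℕ) = cols 1 + 2 := he 1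
  have e3 : (e 3 : ℕ) = cols 2 + 2 := he 2
  have e4 : (e 4 : ℕ) = cols 3 + 2 := he 3
  have m1 : (cols 0 : ℕ) < cols 1 := hmono (by decide)
  have m2 : (cols 1 : ℕ) < cols 2 := hmono (by decide)
  have m3 : (cols 2 : ℕ) < cols 3 := hmono (by decide)
  have hadm : Admissible 2 1 2 4 e := by
    refine ⟨Fin.strictMono_iff_lt_succ.2 fun i => ?_, ?_⟩
    · fin_cases i
      · change (e 0 : ℕ) < e 1
        omega
      · change (e 1 : ℕ) < e 2
        omega
      · change (e 2 : ℕ) < e 3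
        omega
      · change (e 3 : ℕ) < e 4
        omega
    · intro s hs1 hs2 _ _
      interval_cases s
      · change 2 ≤ (e 1 : ℕ) ∧ (e 0 : ℕ) < 6
        omega
      · change 4 ≤ (e 2 : ℕ) ∧ (e 1 : ℕ) < 8
        omega
      · change 6 ≤ (e 3 : ℕ) ∧ (e 2 : ℕ) < 10
        omega
      · change 8 ≤ (e 4 : ℕ) ∧ (e 3 : ℕ) < 12
        omega
  apply h e hadm
  have hdet := Matrix.det_succ_column_zero
    ((pcm 2 1 2 (by norm_num) (by norm_num) H 4).submatrix id e : Matrix (Fin 5) (Fin 5) F)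
  refine hdet.trans (Finset.sum_eq_zero fun i _ => ?_)
  induction i using Fin.cases with
  | zero =>
    refine mul_eq_zero_of_right _ (Eq.trans (congrArg Matrix.det ?_) h0)
    have shift : ∀ (r : Fin 4) (c : Fin 12),
        pcm 2 1 2 (by norm_num) (by norm_num) H 4 (r.succ : Fin 5) (c.natAdd 2 : Fin 14) =
          pcm 2 1 2 (by norm_num) (by norm_num) H 3 r c := by
      intro r c
      fin_cases r <;> fin_cases c <;> rfl
    ext r s
    exact shift r (cols s)
  | succ i =>
    refine mul_eq_zero_of_left (mul_eq_zero_of_right _ ?_) _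
    change pcm 2 1 2 (by norm_num) (by norm_num) H 4 (i.succ : Fin 5) (0 : Fin 14) = 0
    fin_cases i <;> rfl

/-! ### The finite obstruction -/

/-- At every `(b, p, q)` one of 26 polynomials vanishes. They are the minors of `𝔥_3` for
`h_1 = z² + z + b`, `h_2 = z² + p z + q` at the column choices listed in
`Obstructed.not_completeJMDP`. The polynomials are grouped by the variables occurring in them, so
that deciding the property needs no loop over `q` (or `p`) where `b` and `p` (or `b`) suffice. -/
def Obstructed (R : Type*) [CommRing R] : Prop :=
  ∀ b : R, 1 - 2 * b = 0 ∨ b ^ 2 - 3 * b + 1 = 0 ∨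
  ∀ p : R, b * (p - b) = 0 ∨ (1 - p) * (1 - b) = 0 ∨ b ^ 2 - 2 * b * p - b + p = 0 ∨
  ∀ q : R, q * (p ^ 2 - q) = 0 ∨ p * (p ^ 2 - 2 * q) = 0 ∨ p - b - q = 0 ∨
    p - b * p - q = 0 ∨ p ^ 2 - p * q - q = 0 ∨ 1 + q - p - b = 0 ∨
    q ^ 2 - 3 * p ^ 2 * q + p ^ 4 = 0 ∨
    b * q - 2 * b * p - q + p = 0 ∨
    p * q - p ^ 2 - b + p = 0 ∨
    b * q - b ^ 2 + b * p - q = 0 ∨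
    q ^ 2 - 2 * p * q - b * p + p ^ 2 = 0 ∨
    b * p + q - 2 * b - p + 1 = 0 ∨
    q ^ 2 - b * q + b * p ^ 2 - p * q = 0 ∨
    q ^ 2 - p ^ 2 * q - 2 * p * q + p ^ 3 = 0 ∨
    q ^ 2 - b * p * q + b * p ^ 2 - p * q = 0 ∨
    b ^ 2 - b * p - q - b + p = 0 ∨
    b * q - p * q - b * p - q + p ^ 2 = 0 ∨
    b * q - b * p ^ 2 - p * q - q + p ^ 2 = 0 ∨
    2 * p * q - p ^ 3 - b * p - q + p ^ 2 = 0 ∨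
    b * q - b * p ^ 2 - p * q - b * p + p ^ 2 = 0 ∨
    b * q - p ^ 2 * q - b * p ^ 2 - p * q + p ^ 3 = 0

instance Obstructed.decidable (R : Type*) [CommRing R] [Fintype R] [DecidableEq R] :
    Decidable (Obstructed R) := by
  unfold Obstructed; infer_instance

theorem Obstructed.of_ringEquiv {R S : Type*} [CommRing R] [CommRing S] (e : R ≃+* S)
    (h : Obstructed R) : Obstructed S := by
  unfold Obstructed at *
  simp only [e.surjective.forall]
  simpa only [← map_eq_zero_iff e e.injective, map_sub, map_add, map_mul, map_pow, map_one,
    map_ofNat] using h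

theorem Obstructed.not_completeJMDP {F : Type*} [Field F] (hF : Obstructed F) (b p q : F) :
    ¬ CompleteJMDP 2 1 2 (by norm_num) (by norm_num) (Htriple b 1 1 q p 1) 3 := by
  intro h
  rcases hF b with h0 | h0 | hF
  · exact minor_ne_zero_s16 h ![0, 4, 6, 8] (by decide) (by
      rw [det_four]; simp [parityEntry, -mul_eq_zero]; linear_combination h0)
  · exact minor_ne_zero_s16 h ![2, 4, 6, 8] (by decide) (by
      rw [det_four]; simp [parityEntry, -mul_eq_zero]; linear_combination h0)
  rcases hF p with h0 | h0 | h0 | hF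
  · exact minor_ne_zero_s16 h ![0, 5, 6, 10] (by decide) (by
      rw [det_four]; simp [parityEntry, -mul_eq_zero]; linear_combination h0)
  · exact minor_ne_zero_s16 h ![2, 3, 6, 8] (by decide) (by
      rw [det_four]; simp [parityEntry, -mul_eq_zero]; linear_combination h0)
  · exact minor_ne_zero_s16 h ![3, 4, 6, 8] (by decide) (by
      rw [det_four]; simp [parityEntry, -mul_eq_zero]; linear_combination h0)
  rcases hF q with h0 | h0 | h0 | h0 | h0 | h0 | h0 | h0 | h0 | h0 | h0 |
    h0 | h0 | h0 | h0 | h0 | h0 | h0 | h0 | h0 | h0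
  · exact minor_ne_zero_s16 h ![0, 5, 7, 11] (by decide) (by
      rw [det_four]; simp [parityEntry, -mul_eq_zero]; linear_combination h0)
  · exact minor_ne_zero_s16 h ![0, 5, 7, 9] (by decide) (by
      rw [det_four]; simp [parityEntry, -mul_eq_zero]; linear_combination h0)
  · exact minor_ne_zero_s16 h ![0, 4, 7, 8] (by decide) (by
      rw [det_four]; simp [parityEntry, -mul_eq_zero]; linear_combination h0)
  · exact minor_ne_zero_s16 h ![0, 4, 6, 9] (by decide) (by
      rw [det_four]; simp [parityEntry, -mul_eq_zero]; linear_combination h0)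
  · exact minor_ne_zero_s16 h ![0, 4, 7, 9] (by decide) (by
      rw [det_four]; simp [parityEntry, -mul_eq_zero]; linear_combination h0)
  · exact minor_ne_zero_s16 h ![0, 4, 6, 7] (by decide) (by
      rw [det_four]; simp [parityEntry, -mul_eq_zero]; linear_combination h0)
  · exact minor_ne_zero_s16 h ![3, 5, 7, 9] (by decide) (by
      rw [det_four]; simp [parityEntry, -mul_eq_zero]; linear_combination h0)
  · exact minor_ne_zero_s16 h ![2, 4, 6, 9] (by decide) (by
      rw [det_four]; simp [parityEntry, -mul_eq_zero]; linear_combination h0)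
  · exact minor_ne_zero_s16 h ![2, 5, 6, 7] (by decide) (by
      rw [det_four]; simp [parityEntry, -mul_eq_zero]; linear_combination h0)
  · exact minor_ne_zero_s16 h ![0, 6, 7, 8] (by decide) (by
      rw [det_four]; simp [parityEntry, -mul_eq_zero]; linear_combination h0)
  · exact minor_ne_zero_s16 h ![2, 5, 6, 9] (by decide) (by
      rw [det_four]; simp [parityEntry, -mul_eq_zero]; linear_combination h0)
  · exact minor_ne_zero_s16 h ![2, 4, 6, 7] (by decide) (by
      rw [det_four]; simp [parityEntry, -mul_eq_zero]; linear_combination h0)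
  · exact minor_ne_zero_s16 h ![0, 6, 7, 9] (by decide) (by
      rw [det_four]; simp [parityEntry, -mul_eq_zero]; linear_combination h0)
  · exact minor_ne_zero_s16 h ![2, 5, 7, 9] (by decide) (by
      rw [det_four]; simp [parityEntry, -mul_eq_zero]; linear_combination h0)
  · exact minor_ne_zero_s16 h ![2, 5, 8, 9] (by decide) (by
      rw [det_four]; simp [parityEntry, -mul_eq_zero]; linear_combination h0)
  · exact minor_ne_zero_s16 h ![2, 4, 7, 8] (by decide) (by
      rw [det_four]; simp [parityEntry, -mul_eq_zero]; linear_combination h0)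
  · exact minor_ne_zero_s16 h ![2, 5, 7, 8] (by decide) (by
      rw [det_four]; simp [parityEntry, -mul_eq_zero]; linear_combination h0)
  · exact minor_ne_zero_s16 h ![2, 4, 7, 9] (by decide) (by
      rw [det_four]; simp [parityEntry, -mul_eq_zero]; linear_combination h0)
  · exact minor_ne_zero_s16 h ![3, 5, 6, 7] (by decide) (by
      rw [det_four]; simp [parityEntry, -mul_eq_zero]; linear_combination h0)
  · exact minor_ne_zero_s16 h ![3, 4, 6, 9] (by decide) (by
      rw [det_four]; simp [parityEntry, -mul_eq_zero]; linear_combination h0)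
  · exact minor_ne_zero_s16 h ![3, 4, 7, 9] (by decide) (by
      rw [det_four]; simp [parityEntry, -mul_eq_zero]; linear_combination h0)

theorem Obstructed.not_is212 {F : Type*} [Field F] (hF : Obstructed F)
    (h10 h11 h12 h20 h21 h22 : F) : ¬ Is212 3 h10 h11 h12 h20 h21 h22 := by
  rintro ⟨-, h⟩
  have hu : h12 ≠ 0 := by
    rintro rfl
    exact minor_ne_zero_s16 h ![0, 2, 4, 6] (by decide) (by rw [det_four]; simp [parityEntry])
  have hv : h22 ≠ 0 := by
    rintro rfl
    exact minor_ne_zero_s16 h ![1, 3, 5, 7] (by decide) (by rw [det_four]; simp [parityEntry])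
  have ha : h11 ≠ 0 := by
    rintro rfl
    exact minor_ne_zero_s16 h ![0, 4, 6, 8] (by decide) (by rw [det_four]; simp [parityEntry])
  -- `t = h11 / h12` makes the middle coefficient of the first normalized polynomial equal to `1`.
  refine hF.not_completeJMDP (h10 * h12 / h11 ^ 2) (h21 * h12 / (h11 * h22))
    (h20 * h12 ^ 2 / (h22 * h11 ^ 2))
    (completeJMDP_normalize (t := h11 / h12) (u := h12) (v := h22) (div_ne_zero ha hu) ?_)
  convert h using 2 <;> field_simp

theorem obstructed_zmod_three : Obstructed (ZMod 3) := by decide +kernel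

theorem obstructed_zmod_five : Obstructed (ZMod 5) := by decide +kernel

theorem obstructed_zmod_seven : Obstructed (ZMod 7) := by decide +kernel

theorem obstructed_zmod_eleven : Obstructed (ZMod 11) := by decide +kernel

/-- `𝔽₃[i]` with `i² = -1`, a computable model of the field with nine elements. -/
abbrev F9 : Type := QuadraticAlgebra (ZMod 3) (-1) 0

instance F9.fintype : Fintype F9 := Fintype.ofEquiv _ (QuadraticAlgebra.equivProd (-1) 0).symm

/-- `-1` is not a square modulo `3`, which is what makes `F9` a field. -/
instance F9.fact : Fact (∀ r : ZMod 3, r ^ 2 ≠ -1 + 0 * r) := ⟨by decide⟩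

theorem F9.card : Fintype.card F9 = 9 := by
  rw [Fintype.ofEquiv_card, Fintype.card_prod, ZMod.card]

theorem obstructed_F9 : Obstructed F9 := by decide +kernel

/-- A finite field is determined up to isomorphism by its cardinality, so the five decided cases
cover all odd prime powers up to `11`. -/
theorem obstructed_of_card {q : ℕ} (hodd : Odd q) (hq : q ≤ 11)
    (F : Type*) [Field F] [Fintype F] (hF : Fintype.card F = q) : Obstructed F := by
  have hcard : 1 < Fintype.card F := Fintype.one_lt_card
  rw [Nat.odd_iff] at hodd
  have hcases : q = 3 ∨ q = 5 ∨ q = 7 ∨ q = 9 ∨ q = 11 := by omega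
  rcases hcases with rfl | rfl | rfl | rfl | rfl
  · exact obstructed_zmod_three.of_ringEquiv (ZMod.ringEquivOfPrime F (by norm_num) hF)
  · exact obstructed_zmod_five.of_ringEquiv (ZMod.ringEquivOfPrime F (by norm_num) hF)
  · exact obstructed_zmod_seven.of_ringEquiv (ZMod.ringEquivOfPrime F (by norm_num) hF)
  · exact obstructed_F9.of_ringEquiv
      (FiniteField.ringEquivOfCardEq (F9.card.trans hF.symm))
  · exact obstructed_zmod_eleven.of_ringEquiv (ZMod.ringEquivOfPrime F (by norm_num) hF)

/-- For every odd prime power `q ≤ 11`, there exists no `(2,1,2)`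
complete `3`-MDP convolutional code over the field `F_q` with `q` elements; consequently
there is also no `(2,1,2)` complete MDP (= complete `4`-MDP) convolutional code over
any such field. -/
theorem stmt16 (q : ℕ) (hodd : Odd q) (hpp : IsPrimePow q) (hq : q ≤ 11)
    (F : Type*) [Field F] [Fintype F] (hF : Fintype.card F = q) :
    (¬ ∃ h10 h11 h12 h20 h21 h22 : F, Is212 3 h10 h11 h12 h20 h21 h22) ∧
    (¬ ∃ h10 h11 h12 h20 h21 h22 : F, Is212 4 h10 h11 h12 h20 h21 h22) := by
  have hobs := obstructed_of_card hodd hq F hF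
  refine ⟨?_, ?_⟩
  · rintro ⟨h10, h11, h12, h20, h21, h22, h⟩
    exact hobs.not_is212 _ _ _ _ _ _ h
  · rintro ⟨h10, h11, h12, h20, h21, h22, hcop, h⟩
    exact hobs.not_is212 _ _ _ _ _ _ ⟨hcop, completeJMDP_three_of_four h⟩
end
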